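/- arXiv:1601.07343 — 3 statements merged into one kernel-verified Lean document; each statement's English description precedes it below -/
import Mathlib

section
/- No pure double circulant self-dual binary code of length 90 with minimum weight 14 has an extremal self-dual neighbor: if C is such a code and C' is a self-dual code of length 90 with dim(C ∩ C') = 44, then the minimum weight of C' is at most 14. -/
/-- The standard inner product on `ι → ZMod 2`. -/
def dot {ι : Type*} [Fintype ι] (x y : ι → ZMod 2) : ZMod 2 := ∑ i, x i * y i

/-- A binary linear code is self-dual if it coincides with its dual. -/
def IsSelfDual {ι : Type*} [Fintype ι] (C : Submodule (ZMod 2) (ι → ZMod 2)) : Prop :=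
  ∀ x, x ∈ C ↔ ∀ y ∈ C, dot x y = 0

/-- `C` has minimum (nonzero) weight exactly `d`. -/
def MinWeightIs {ι : Type*} [Fintype ι] (C : Submodule (ZMod 2) (ι → ZMod 2)) (d : ℕ) : Prop :=
  (∃ x ∈ C, x ≠ 0 ∧ hammingNorm x = d) ∧ ∀ x ∈ C, x ≠ 0 → d ≤ hammingNorm x

/-- `A_i(C)`: the number of codewords of `C` of Hamming weight `i`. -/
noncomputable def weightEnum {ι : Type*} [Fintype ι] (C : Submodule (ZMod 2) (ι → ZMod 2)) (i : ℕ) : ℕ :=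
  Set.ncard {x : ι → ZMod 2 | x ∈ C ∧ hammingNorm x = i}

/-- Two codes are equivalent if a coordinate permutation maps one onto the other. -/
def CodeEquiv {ι : Type*} [Fintype ι] (C C' : Submodule (ZMod 2) (ι → ZMod 2)) : Prop :=
  ∃ σ : Equiv.Perm ι, Submodule.map (LinearMap.funLeft (ZMod 2) (ZMod 2) ⇑σ) C = C'

/-- The order of the automorphism group of a code: the number of coordinate
permutations mapping the code onto itself. -/
noncomputable def autGroupOrder {ι : Type*} [Fintype ι] (C : Submodule (ZMod 2) (ι → ZMod 2)) : ℕ :=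
  Nat.card {σ : Equiv.Perm ι // Submodule.map (LinearMap.funLeft (ZMod 2) (ZMod 2) ⇑σ) C = C}

/-- A circulant matrix: each row is the cyclic shift of the previous one. -/
def IsCirculant {n : ℕ} (R : Matrix (Fin n) (Fin n) (ZMod 2)) : Prop :=
  ∃ v : Fin n → ZMod 2, R = Matrix.circulant v

/-- The pure double circulant code with generator matrix `(I_n | R)`. -/
def pureDCC {n : ℕ} (R : Matrix (Fin n) (Fin n) (ZMod 2)) :
    Submodule (ZMod 2) (Fin n ⊕ Fin n → ZMod 2) :=
  Submodule.span (ZMod 2)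
    (Set.range fun i : Fin n =>
      Sum.elim (fun j => if j = i then (1 : ZMod 2) else 0) (R i))

/-- A bordered matrix: first row `(0,1,…,1)`, first column `(0,1,…,1)ᵀ`, and
lower-right block an `n × n` circulant matrix. -/
def IsBorderMatrix {n : ℕ} (B : Matrix (Fin (n + 1)) (Fin (n + 1)) (ZMod 2)) : Prop :=
  B 0 0 = 0 ∧ (∀ j, j ≠ 0 → B 0 j = 1) ∧ (∀ i, i ≠ 0 → B i 0 = 1) ∧
  ∃ R' : Matrix (Fin n) (Fin n) (ZMod 2), IsCirculant R' ∧
    ∀ i j : Fin n, B i.succ j.succ = R' i j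

/-- The bordered double circulant code with generator matrix `(I_{n+1} | B)`. -/
def borderedDCC {n : ℕ} (B : Matrix (Fin (n + 1)) (Fin (n + 1)) (ZMod 2)) :
    Submodule (ZMod 2) (Fin (n + 1) ⊕ Fin (n + 1) → ZMod 2) :=
  Submodule.span (ZMod 2)
    (Set.range fun i : Fin (n + 1) =>
      Sum.elim (fun j => if j = i then (1 : ZMod 2) else 0) (B i))

theorem aux_sum {ι : Type*} [Fintype ι] {C : Submodule (ZMod 2) (ι → ZMod 2)}
    (hC : IsSelfDual C) {x : ι → ZMod 2} (hx : x ∈ C) : ∑ i, x i = 0 := by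
  have h := (hC x).1 hx x hx
  unfold dot at h
  rw [← h]
  refine Finset.sum_congr rfl fun i _ => ?_
  generalize x i = a
  revert a
  decide

theorem aux_const {ι : Type*} [Fintype ι] {C : Submodule (ZMod 2) (ι → ZMod 2)}
    (hC : IsSelfDual C) (a : ZMod 2) : (fun _ => a) ∈ C := by
  rw [hC]
  intro y hy
  unfold dot
  rw [← Finset.mul_sum, aux_sum hC hy, mul_zero]

theorem aux_parity {V κ : Type*} [AddCommGroup V] [Module (ZMod 2) V]
    (C D : Submodule (ZMod 2) V)
    (h2 : ∀ u ∈ C, ∀ v ∈ C, u ∉ D → v ∉ D → u + v ∈ D)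
    (f : κ → V) (hf : ∀ i, f i ∈ C) (hf' : ∀ i, f i ∉ D) (s : Finset κ) :
    ∑ i ∈ s, f i ∈ D ↔ Even s.card := by
  classical
  induction s using Finset.induction_on with
  | empty => simp
  | insert a s ha ih =>
    rw [Finset.sum_insert ha, Finset.card_insert_of_notMem ha, Nat.even_add_one, ← ih]
    constructor
    · intro h1 h3
      exact hf' a ((Submodule.add_mem_iff_left D h3).1 h1)
    · intro h
      exact h2 _ (hf a) _ (Submodule.sum_mem _ fun i _ => hf i) (hf' a) h

def shf (k : Fin 45) : Fin 45 ⊕ Fin 45 ≃ Fin 45 ⊕ Fin 45 :=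
  Equiv.sumCongr (Equiv.addRight k) (Equiv.addRight k)

theorem aux_shift (R : Matrix (Fin 45) (Fin 45) (ZMod 2)) (hR : IsCirculant R) (k : Fin 45)
    (x : Fin 45 ⊕ Fin 45 → ZMod 2) (hx : x ∈ pureDCC R) : x ∘ shf k ∈ pureDCC R := by
  obtain ⟨v, rfl⟩ := hR
  have : pureDCC (Matrix.circulant v) ≤
      (pureDCC (Matrix.circulant v)).comap (LinearMap.funLeft (ZMod 2) (ZMod 2) (shf k)) := by
    conv_lhs => unfold pureDCC
    rw [Submodule.span_le]
    rintro _ ⟨i, rfl⟩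
    refine Submodule.subset_span ⟨i - k, ?_⟩
    funext j
    rcases j with j | j
    · simp [LinearMap.funLeft, shf, eq_sub_iff_add_eq]
    · simp [LinearMap.funLeft, shf, Matrix.circulant_apply, sub_sub, add_comm]
  exact this hx

theorem aux_index (R : Matrix (Fin 45) (Fin 45) (ZMod 2))
    (C' : Submodule (ZMod 2) (Fin 45 ⊕ Fin 45 → ZMod 2))
    (hnb : Module.finrank (ZMod 2) ↥(pureDCC R ⊓ C') = 44) :
    ∀ u ∈ pureDCC R, ∀ v ∈ pureDCC R, u ∉ C' → v ∉ C' → u + v ∈ C' := by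
  intro u hu v hv hu' hv'
  have hle : Module.finrank (ZMod 2) (pureDCC R) ≤ 45 := by
    have := finrank_range_le_card (R := ZMod 2) (fun i : Fin 45 =>
      (Sum.elim (fun j => if j = i then (1 : ZMod 2) else 0) (R i) : Fin 45 ⊕ Fin 45 → ZMod 2))
    rw [Fintype.card_fin] at this
    exact this
  set D := pureDCC R ⊓ C' with hD
  have hlt : D < D ⊔ Submodule.span (ZMod 2) {u} := by
    refine lt_of_le_of_ne le_sup_left fun h => hu' ?_
    have : u ∈ D := by
      rw [h]; exact Submodule.mem_sup_right (Submodule.mem_span_singleton_self u)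
    exact this.2
  have h1 := Submodule.finrank_lt_finrank_of_lt hlt
  have hsub : D ⊔ Submodule.span (ZMod 2) {u} ≤ pureDCC R :=
    sup_le inf_le_left (by rw [Submodule.span_singleton_le_iff_mem]; exact hu)
  have heq := Submodule.eq_of_le_of_finrank_le hsub (by omega)
  rw [← heq, Submodule.mem_sup] at hv
  obtain ⟨d, hd, w, hw, rfl⟩ := hv
  obtain ⟨a, rfl⟩ := Submodule.mem_span_singleton.1 hw
  have ha : a = 0 ∨ a = 1 := by clear hw hv'; revert a; decide
  rcases ha with rfl | rfl
  · exact absurd (by simpa using hd.2) hv'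
  · have : u + (d + (1 : ZMod 2) • u) = d := by
      rw [one_smul, add_left_comm, ZModModule.add_self, add_zero]
    rw [this]; exact hd.2

theorem no_extremal_selfdual_neighbor_90 (R : Matrix (Fin 45) (Fin 45) (ZMod 2))
    (hR : IsCirculant R) (hsd : IsSelfDual (pureDCC R))
    (hmin : MinWeightIs (pureDCC R) 14)
    (C' : Submodule (ZMod 2) (Fin 45 ⊕ Fin 45 → ZMod 2)) (hC' : IsSelfDual C')
    (hnb : Module.finrank (ZMod 2) ↥(pureDCC R ⊓ C') = 44) :
    ∃ x ∈ C', x ≠ 0 ∧ hammingNorm x ≤ 14 := by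
  by_contra! hcon
  obtain ⟨⟨x, hx, hx0, hxw⟩, -⟩ := hmin
  have key := (aux_parity (pureDCC R) C' (aux_index R C' hnb) (fun k : Fin 45 => x ∘ shf k)
    (fun k => aux_shift R hR k x hx) (fun k hk => by
      have hne : x ∘ shf k ≠ 0 := fun h => hx0 (by
        funext j
        have := congrFun h ((shf k).symm j)
        simpa using this)
      have h := hcon _ hk hne
      have hw : hammingNorm (x ∘ shf k) = hammingNorm x := by
        unfold hammingNorm
        refine Finset.card_bij (fun j _ => shf k j) ?_ ?_ ?_
        · intro j hj; simpa using hj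
        · intro a _ b _ hab; exact (shf k).injective hab
        · intro b hb; exact ⟨(shf k).symm b, by simpa using hb, by simp⟩
      omega) Finset.univ).1 ?_
  · rw [Finset.card_univ, Fintype.card_fin] at key
    exact absurd key (by decide)
  · have hs := aux_sum hsd hx
    rw [Fintype.sum_sum_type] at hs
    have hAB : ∑ k, x (Sum.inl k) = ∑ k, x (Sum.inr k) := by
      rw [← sub_eq_zero, ZModModule.sub_eq_add, hs]
    convert aux_const hC' (∑ k, x (Sum.inl k)) using 1
    funext j
    rw [Finset.sum_apply]
    rcases j with j | j
    · exact Equiv.sum_comp (Equiv.addLeft j) (fun k => x (Sum.inl k))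
    · rw [hAB]
      exact Equiv.sum_comp (Equiv.addLeft j) (fun k => x (Sum.inr k))
end

section
/- Every bordered double circulant self-dual binary code C of length 92 with minimum weight 16 satisfies the weight enumerator relation A_18(C) = 121296 − 2·(A_16(C) − 4692), where A_i(C) denotes the number of codewords of C of Hamming weight i (i.e., C has weight enumerator of type W_{92,3}). -/
namespace W92

/-- Sign character of `ZMod 2`. -/
def sg (a : ZMod 2) : ℤ := if a = 0 then 1 else -1

lemma sg_add (a b : ZMod 2) : sg (a + b) = sg a * sg b := by
  revert a b; decide

lemma sg_zero : sg 0 = 1 := rfl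

lemma sg_eq (a : ZMod 2) : sg a = 1 - 2 * (a.val : ℤ) := by
  revert a; decide

section gen
variable {ι : Type*} [Fintype ι]

lemma dot_comm (x y : ι → ZMod 2) : dot x y = dot y x := by
  simp [dot, mul_comm]

lemma dot_add_left (x y z : ι → ZMod 2) : dot (x + y) z = dot x z + dot y z := by
  simp [dot, add_mul, Finset.sum_add_distrib]

lemma dot_add_right (x y z : ι → ZMod 2) : dot z (x + y) = dot z x + dot z y := by
  simp [dot, mul_add, Finset.sum_add_distrib]

lemma wt_eq (x : ι → ZMod 2) : hammingNorm x = ∑ i, (x i).val := by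
  classical
  unfold hammingNorm
  rw [Finset.card_filter]
  refine Finset.sum_congr rfl fun i _ => ?_
  generalize x i = a
  have h : ∀ a : ZMod 2, a = 0 ∨ a = 1 := by decide
  rcases h a with rfl | rfl <;> simp [ZMod.val_one]

lemma wt_add (x y : ι → ZMod 2) :
    hammingNorm (x + y) + 2 * ∑ i, (x i * y i).val = hammingNorm x + hammingNorm y := by
  simp only [wt_eq, Finset.mul_sum, ← Finset.sum_add_distrib]
  refine Finset.sum_congr rfl fun i _ => ?_
  simp only [Pi.add_apply]
  generalize x i = a
  generalize y i = b
  revert a b; decide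

lemma even_of_dot (x y : ι → ZMod 2) (h : dot x y = 0) : 2 ∣ ∑ i, (x i * y i).val := by
  rw [← ZMod.natCast_eq_zero_iff]
  push_cast
  simpa [dot] using h

/-- The sum of signs. -/
def X (x : ι → ZMod 2) : ℤ := ∑ i, sg (x i)

lemma X_eq (x : ι → ZMod 2) : X x = (Fintype.card ι : ℤ) - 2 * (hammingNorm x : ℤ) := by
  simp only [X, sg_eq, wt_eq, Finset.sum_sub_distrib, ← Finset.mul_sum]
  simp

variable [DecidableEq ι]

lemma dot_single (j : ι) (x : ι → ZMod 2) : dot (Pi.single j 1) x = x j := by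
  simp [dot, Pi.single_apply]

lemma norm_single (j : ι) : hammingNorm (Pi.single j (1 : ZMod 2) : ι → ZMod 2) = 1 := by
  rw [wt_eq, Finset.sum_eq_single j]
  · simp [ZMod.val_one]
  · intro b _ hb; simp [hb]
  · simp

open Classical in
lemma sum_code (C : Submodule (ZMod 2) (ι → ZMod 2)) (hC : IsSelfDual C) (u : ι → ZMod 2) :
    ∑ c with c ∈ C, sg (dot u c) = if u ∈ C then (Finset.card {c | c ∈ C} : ℤ) else 0 := by
  split_ifs with h
  · rw [Finset.sum_congr rfl (g := fun _ => (1 : ℤ))]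
    · simp
    · intro c hc
      simp only [Finset.mem_filter, Finset.mem_univ, true_and] at hc
      rw [(hC u).1 h c hc, sg_zero]
  · have : ∃ y ∈ C, dot u y ≠ 0 := by
      by_contra! h2
      exact h ((hC u).2 h2)
    obtain ⟨y, hy, hne⟩ := this
    have h1 : sg (dot u y) = -1 := by simp [sg, hne]
    have h2 : ∑ c with c ∈ C, sg (dot u c) = ∑ c with c ∈ C, sg (dot u (c + y)) := by
      symm
      refine Finset.sum_equiv (Equiv.addRight y) ?_ ?_
      · intro i
        simp [Submodule.add_mem_iff_left C hy]
      · intro i _; rfl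
    have h3 : ∑ c with c ∈ C, sg (dot u (c + y)) = - ∑ c with c ∈ C, sg (dot u c) := by
      rw [← Finset.sum_neg_distrib]
      refine Finset.sum_congr rfl fun c _ => ?_
      rw [dot_add_right, sg_add, h1]; ring
    omega

lemma sum_all (u : ι → ZMod 2) :
    ∑ c : ι → ZMod 2, sg (dot u c) = if u = 0 then (2 : ℤ) ^ Fintype.card ι else 0 := by
  split_ifs with h
  · subst h
    simp [dot, sg_zero, Fintype.card_pi, ZMod.card]
  · obtain ⟨j, hj⟩ : ∃ j, u j ≠ 0 := by
      by_contra! h2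
      exact h (funext h2)
    have h1 : sg (dot u (Pi.single j 1)) = -1 := by
      rw [dot_comm, dot_single]; simp [sg, hj]
    have h2 : ∑ c : ι → ZMod 2, sg (dot u c) = ∑ c : ι → ZMod 2, sg (dot u (c + Pi.single j 1)) := by
      symm
      exact Fintype.sum_equiv (Equiv.addRight (Pi.single j 1)) _ _ (fun i => rfl)
    have h3 : ∑ c : ι → ZMod 2, sg (dot u (c + Pi.single j 1)) = - ∑ c, sg (dot u c) := by
      rw [← Finset.sum_neg_distrib]
      refine Finset.sum_congr rfl fun c _ => ?_
      rw [dot_add_right, sg_add, h1]; ring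
    omega

open Classical in
lemma card_code (C : Submodule (ZMod 2) (ι → ZMod 2)) (hC : IsSelfDual C) :
    (Finset.card {c | c ∈ C} : ℤ) * (Finset.card {c | c ∈ C} : ℤ) = 2 ^ Fintype.card ι := by
  have h1 : ∑ u : ι → ZMod 2, ∑ c with c ∈ C, sg (dot u c)
      = (Finset.card {c | c ∈ C} : ℤ) * (Finset.card {c | c ∈ C} : ℤ) := by
    simp only [sum_code C hC]
    rw [← Finset.sum_filter]
    simp
  rw [← h1, Finset.sum_comm]
  have h2 : ∀ c : ι → ZMod 2, ∑ u : ι → ZMod 2, sg (dot u c)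
      = if c = 0 then (2 : ℤ) ^ Fintype.card ι else 0 := by
    intro c
    rw [← sum_all c]
    exact Finset.sum_congr rfl fun u _ => by rw [dot_comm]
  simp only [h2]
  rw [Finset.sum_ite_eq']
  simp

open Classical in
lemma moment (C : Submodule (ZMod 2) (ι → ZMod 2)) (hC : IsSelfDual C) (d : ℕ)
    (hd : ∀ x ∈ C, x ≠ 0 → d ≤ hammingNorm x) (m : ℕ) :
    ∀ u : ι → ZMod 2, hammingNorm u + m < d →
    (Finset.card {c | c ∈ C} : ℤ) * ∑ c with c ∈ C, sg (dot u c) * X c ^ m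
      = ∑ c, sg (dot u c) * X c ^ m := by
  induction m with
  | zero =>
    intro u hu
    simp only [pow_zero, mul_one]
    rw [sum_code C hC, sum_all]
    by_cases h0 : u = 0
    · subst h0
      simp [card_code C hC]
    · have : u ∉ C := fun h => by have := hd u h h0; omega
      simp [h0, this]
  | succ m ih =>
    intro u hu
    have key : ∀ s : Finset (ι → ZMod 2), ∑ c ∈ s, sg (dot u c) * X c ^ (m + 1)
        = ∑ j, ∑ c ∈ s, sg (dot (u + Pi.single j 1) c) * X c ^ m := by
      intro s
      rw [Finset.sum_comm]
      refine Finset.sum_congr rfl fun c _ => ?_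
      rw [← Finset.sum_mul]
      have : X c = ∑ j, sg (c j) := rfl
      rw [pow_succ', ← mul_assoc]
      congr 1
      rw [this, Finset.mul_sum]
      refine Finset.sum_congr rfl fun j _ => ?_
      rw [dot_add_left, sg_add, dot_single]
    rw [key, key, Finset.mul_sum]
    refine Finset.sum_congr rfl fun j _ => ih _ ?_
    have := wt_add u (Pi.single j 1)
    rw [norm_single] at this
    omega

open Polynomial in
lemma genfun (u : ι → ZMod 2) :
    ∑ x : ι → ZMod 2, C (sg (dot u x)) * (Polynomial.X : ℤ[X]) ^ hammingNorm x
      = (1 - Polynomial.X) ^ hammingNorm u * (1 + Polynomial.X) ^ (Fintype.card ι - hammingNorm u) := by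
  have h1 : ∀ x : ι → ZMod 2, C (sg (dot u x)) * (Polynomial.X : ℤ[X]) ^ hammingNorm x
      = ∏ i, (C (sg (u i * x i)) * Polynomial.X ^ (x i).val) := by
    intro x
    rw [Finset.prod_mul_distrib, Finset.prod_pow_eq_pow_sum, wt_eq]
    congr 1
    rw [← map_prod]
    congr 1
    unfold dot
    induction (Finset.univ : Finset ι) using Finset.induction_on with
    | empty => simp [sg_zero]
    | insert a s ha ih => rw [Finset.sum_insert ha, Finset.prod_insert ha, sg_add, ih]
  simp only [h1]
  have h2 := Finset.prod_univ_sum (fun _ : ι => (Finset.univ : Finset (ZMod 2)))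
    (fun i a => (C (sg (u i * a)) * (Polynomial.X : ℤ[X]) ^ a.val))
  rw [Fintype.piFinset_univ] at h2
  rw [← h2]
  have h3 : ∀ i, ∑ a : ZMod 2, (C (sg (u i * a)) * (Polynomial.X : ℤ[X]) ^ a.val)
      = if u i ≠ 0 then 1 - Polynomial.X else 1 + Polynomial.X := by
    intro i
    have hs : ∀ f : ZMod 2 → ℤ[X], ∑ a, f a = f 0 + f 1 := fun f => Fin.sum_univ_two f
    rw [hs]
    have hv : (1 : ZMod 2).val = 1 := rfl
    by_cases h : u i = 0
    · simp [h, sg_zero, hv]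
    · have : sg (u i) = -1 := by simp [sg, h]
      simp [h, this, hv, sg_zero, sub_eq_add_neg]
  simp only [h3]
  rw [Finset.prod_ite, Finset.prod_const, Finset.prod_const]
  congr 2
  have := Finset.card_filter_add_card_filter_not (s := (Finset.univ : Finset ι)) (fun i => u i ≠ 0)
  unfold hammingNorm
  rw [Finset.card_univ] at this
  omega

open Polynomial in
lemma sum_wt (u : ι → ZMod 2) (f : ℕ → ℤ) :
    ∑ x : ι → ZMod 2, sg (dot u x) * f (hammingNorm x)
      = ∑ w ∈ Finset.range (Fintype.card ι + 1),
        ((1 - Polynomial.X) ^ hammingNorm u *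
          (1 + Polynomial.X : ℤ[X]) ^ (Fintype.card ι - hammingNorm u)).coeff w * f w := by
  rw [← genfun]
  simp only [finsetSum_coeff, coeff_C_mul, coeff_X_pow, Finset.sum_mul]
  rw [Finset.sum_comm]
  refine Finset.sum_congr rfl fun x _ => ?_
  rw [Finset.sum_eq_single (hammingNorm x)]
  · simp
  · intro b _ hb; simp [hb]
  · intro h
    exact absurd (Finset.mem_range.2 (Nat.lt_succ_of_le hammingNorm_le_card_fintype)) h

end gen

/-- first certificate polynomial -/
def p (X : ℤ) : ℤ := ∑ k : Fin 8, (![-4902025550207385600, 402677609596452864, -4858021223071744,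
  20088436752384, -36613271552, 32032000, -13104, 2] : Fin 8 → ℤ) k * X ^ (2 * (k : ℕ))

/-- second certificate polynomial -/
def q (X : ℤ) : ℤ := ∑ k : Fin 7, (![-4902025550207385600, 331429256116568064, -3197724305391616,
  10146392768512, -13296611328, 7431424, -1456] : Fin 7 → ℤ) k * X ^ (2 * (k : ℕ))

lemma coeff0 (w : ℕ) : ((1 - Polynomial.X) ^ 0 *
    (1 + Polynomial.X : Polynomial ℤ) ^ (92 - 0)).coeff w
    = ((Nat.descFactorial 92 w / Nat.factorial w : ℕ) : ℤ) := by
  rw [pow_zero, one_mul, Polynomial.coeff_one_add_X_pow, Nat.choose_eq_descFactorial_div_factorial]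

lemma coeff2 (w : ℕ) : ((1 - Polynomial.X) ^ 2 *
    (1 + Polynomial.X : Polynomial ℤ) ^ (92 - 2)).coeff w
    = ((Nat.descFactorial 92 w / Nat.factorial w : ℕ) : ℤ) -
      4 * (if w = 0 then 0 else ((Nat.descFactorial 90 (w - 1) / Nat.factorial (w - 1) : ℕ) : ℤ)) := by
  have : ((1 - Polynomial.X) ^ 2 * (1 + Polynomial.X : Polynomial ℤ) ^ (92 - 2))
      = (1 + Polynomial.X) ^ 92 -
        Polynomial.C 4 * (Polynomial.X * (1 + Polynomial.X : Polynomial ℤ) ^ 90) := by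
    have h4 : (Polynomial.C 4 : Polynomial ℤ) = 4 := rfl
    have h92 : (1 + Polynomial.X : Polynomial ℤ) ^ 92
      = (1 + Polynomial.X) ^ 2 * (1 + Polynomial.X) ^ 90 := by rw [← pow_add]
    rw [h4, h92]
    show ((1 - Polynomial.X) ^ 2 * (1 + Polynomial.X : Polynomial ℤ) ^ 90) = _
    generalize (1 + Polynomial.X : Polynomial ℤ) ^ 90 = Z
    ring
  rw [this, Polynomial.coeff_sub, Polynomial.coeff_C_mul, Polynomial.coeff_one_add_X_pow,
    ← Nat.choose_eq_descFactorial_div_factorial, ← Nat.choose_eq_descFactorial_div_factorial]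
  cases w with
  | zero => rw [Polynomial.coeff_X_mul_zero, if_pos rfl]
  | succ w =>
    rw [Polynomial.coeff_X_mul, Polynomial.coeff_one_add_X_pow, if_neg (Nat.succ_ne_zero w),
      Nat.add_sub_cancel]

set_option maxRecDepth 100000 in
lemma total :
    ∑ w ∈ Finset.range (92 + 1), ((Nat.descFactorial 92 w / Nat.factorial w : ℕ) : ℤ) *
        p (92 - 2 * (w : ℤ)) +
    ∑ w ∈ Finset.range (92 + 1), (((Nat.descFactorial 92 w / Nat.factorial w : ℕ) : ℤ) -
      4 * (if w = 0 then 0 else ((Nat.descFactorial 90 (w - 1) / Nat.factorial (w - 1) : ℕ) : ℤ))) *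
        q (92 - 2 * (w : ℤ)) = 2 ^ 46 * 104902119499207714044641280000 := by
  decide +kernel

set_option maxRecDepth 100000 in
lemma gval : ∀ w ∈ Finset.range (92 + 1), w % 2 = 0 → (w = 0 ∨ 16 ≤ w) → (w = 92 ∨ w ≤ 76) →
    p (92 - 2 * (w : ℤ)) + (1 - ((w % 4 : ℕ) : ℤ)) * q (92 - 2 * (w : ℤ)) =
      (if w = 0 then 2346494778271751498366976000 else 0) +
      (if w = 92 then 2346494778271751498366976000 else 0) +
      (if w = 16 then 766828358912337090969600 else 0) +
      (if w = 76 then 766828358912337090969600 else 0) +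
      (if w = 18 then 383414179456168545484800 else 0) +
      (if w = 74 then 383414179456168545484800 else 0) := by
  decide +kernel

open Classical in
lemma final {ι : Type*} [Fintype ι] (hι : Fintype.card ι = 92)
    (C : Submodule (ZMod 2) (ι → ZMod 2)) (hC : IsSelfDual C)
    (hd : ∀ x ∈ C, x ≠ 0 → 16 ≤ hammingNorm x) (s : ι → ZMod 2) (hs2 : hammingNorm s = 2)
    (hs : ∀ c ∈ C, hammingNorm c % 4 = 2 * (dot s c).val) :
    (weightEnum C 18 : ℤ) = 121296 - 2 * ((weightEnum C 16 : ℤ) - 4692) := by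
  have hN : (Finset.card {c | c ∈ C} : ℤ) = 2 ^ 46 := by
    have h := card_code C hC
    rw [hι] at h
    have h1 : (0 : ℤ) ≤ (Finset.card {c | c ∈ C} : ℤ) := Int.natCast_nonneg _
    rw [← mul_self_inj h1 (by norm_num), h]
    norm_num
  have hX : ∀ c : ι → ZMod 2, X c = 92 - 2 * (hammingNorm c : ℤ) := by
    intro c; rw [X_eq, hι]; rfl
  have hp : (2 : ℤ) ^ 46 * ∑ c with c ∈ C, p (X c) = ∑ c : ι → ZMod 2, p (X c) := by
    unfold p
    rw [Finset.sum_comm, Finset.sum_comm (s := (Finset.univ : Finset (ι → ZMod 2))), Finset.mul_sum]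
    refine Finset.sum_congr rfl fun k _ => ?_
    rw [← Finset.mul_sum, ← Finset.mul_sum, mul_left_comm]
    congr 1
    have := moment C hC 16 hd (2 * (k : ℕ)) 0 (by simp; omega)
    rw [hN] at this
    simpa [dot, sg_zero] using this
  have hq : (2 : ℤ) ^ 46 * ∑ c with c ∈ C, sg (dot s c) * q (X c)
      = ∑ c : ι → ZMod 2, sg (dot s c) * q (X c) := by
    unfold q
    simp only [Finset.mul_sum (Finset.univ : Finset (Fin 7))]
    rw [Finset.sum_comm, Finset.sum_comm (s := (Finset.univ : Finset (ι → ZMod 2))), Finset.mul_sum]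
    refine Finset.sum_congr rfl fun k _ => ?_
    simp only [mul_left_comm (sg _)]
    rw [← Finset.mul_sum, ← Finset.mul_sum, mul_left_comm]
    congr 1
    have := moment C hC 16 hd (2 * (k : ℕ)) s (by omega)
    rwa [hN] at this
  have tp := sum_wt (0 : ι → ZMod 2) (fun w => p (92 - 2 * (w : ℤ)))
  have tq := sum_wt s (fun w => q (92 - 2 * (w : ℤ)))
  rw [hι, hammingNorm_zero] at tp
  rw [hι, hs2] at tq
  simp only [coeff0, ← hX] at tp
  simp only [coeff2, ← hX] at tq
  have tp' : ∑ x : ι → ZMod 2, sg (dot 0 x) * p (X x) = ∑ x : ι → ZMod 2, p (X x) := by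
    simp [dot, sg_zero]
  rw [tp'] at tp
  have tot : ∑ c with c ∈ C, (p (X c) + sg (dot s c) * q (X c))
      = 104902119499207714044641280000 := by
    have h2 : (2 : ℤ) ^ 46 ≠ 0 := by norm_num
    apply mul_left_cancel₀ h2
    rw [← total, ← tp, ← tq, ← hp, ← hq, Finset.sum_add_distrib, mul_add]
  have hone : (1 : ι → ZMod 2) ∈ C := by
    rw [hC]
    intro y hy
    rw [← (hC y).1 hy y hy]
    refine Finset.sum_congr rfl fun i _ => ?_
    generalize y i = a
    simp only [Pi.one_apply]
    revert a; decide
  have hcomp : ∀ x : ι → ZMod 2, hammingNorm (x + 1) + hammingNorm x = 92 := by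
    intro x
    rw [wt_eq, wt_eq, ← Finset.sum_add_distrib, ← hι, ← Finset.card_univ, Finset.card_eq_sum_ones]
    refine Finset.sum_congr rfl fun i _ => ?_
    simp only [Pi.add_apply, Pi.one_apply]
    generalize x i = a
    revert a; decide
  have hterm : ∀ c ∈ C, p (X c) + sg (dot s c) * q (X c) =
      (if hammingNorm c = 0 then 2346494778271751498366976000 else 0) +
      (if hammingNorm c = 92 then 2346494778271751498366976000 else 0) +
      (if hammingNorm c = 16 then 766828358912337090969600 else 0) +
      (if hammingNorm c = 76 then 766828358912337090969600 else 0) +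
      (if hammingNorm c = 18 then 383414179456168545484800 else 0) +
      (if hammingNorm c = 74 then 383414179456168545484800 else 0) := by
    intro c hc
    have h4 := hs c hc
    have hle : hammingNorm c ≤ 92 := hι ▸ hammingNorm_le_card_fintype
    have e1 : hammingNorm c = 0 ∨ 16 ≤ hammingNorm c := by
      by_cases h : c = 0
      · left; simp [h]
      · right; exact hd c hc h
    have e2 : hammingNorm c = 92 ∨ hammingNorm c ≤ 76 := by
      have := hcomp c
      by_cases h : c + 1 = 0
      · left; rw [h, hammingNorm_zero] at this; omega
      · right
        have := hd _ (C.add_mem hc hone) h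
        omega
    rw [← gval _ (Finset.mem_range.2 (by omega)) (by omega) e1 e2, hX, sg_eq, h4]
    push_cast
    ring
  have hA : ∀ k : ℕ, (weightEnum C k : ℤ) = ∑ c with c ∈ C, if hammingNorm c = k then 1 else 0 := by
    intro k
    rw [← Finset.sum_filter, Finset.filter_filter]
    simp only [Finset.sum_const, nsmul_eq_mul, mul_one, weightEnum]
    rw [← Set.ncard_coe_finset]
    simp
  have hA' : ∀ (k : ℕ) (a : ℤ), (∑ c with c ∈ C, if hammingNorm c = k then a else 0)
      = a * weightEnum C k := by
    intro k a
    rw [hA, Finset.mul_sum]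
    exact Finset.sum_congr rfl fun c _ => by split_ifs <;> simp
  have hsym : ∀ k ≤ 92, (weightEnum C (92 - k) : ℤ) = weightEnum C k := by
    intro k hk
    rw [hA, hA]
    refine Finset.sum_equiv (Equiv.addRight 1) ?_ ?_
    · intro c
      simp [Submodule.add_mem_iff_left C hone]
    · intro c _
      have := hcomp c
      simp only [Equiv.coe_addRight]
      congr 1
      simp only [eq_iff_iff]
      omega
  have hz : (weightEnum C 0 : ℤ) = 1 := by
    rw [hA]
    simp only [hammingNorm_eq_zero]
    rw [Finset.sum_ite_eq']
    simp
  rw [Finset.sum_congr rfl (fun c hc => hterm c (by simpa using hc))] at tot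
  simp only [Finset.sum_add_distrib, hA'] at tot
  have s0 := hsym 0 (by norm_num)
  have s16 := hsym 16 (by norm_num)
  have s18 := hsym 18 (by norm_num)
  norm_num at s0 s16 s18
  rw [s0, s16, s18, hz] at tot
  omega

/-- row weights of the circulant are divisible by four -/
lemma circ (v : Fin 45 → ZMod 2) (heven : 2 ∣ ∑ k, (v k).val)
    (hodd : ∀ d : Fin 45, d ≠ 0 → (∑ k, (v k * v (k + d)).val) % 2 = 1) :
    (∑ k, (v k).val) % 4 = 0 := by
  obtain ⟨w, hw⟩ : ∃ w, w = ∑ k, (v k).val := ⟨_, rfl⟩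
  rw [← hw] at heven ⊢
  let l : Fin 45 → ℕ := fun d => ∑ k, (v k * v (k + d)).val
  have hvm : ∀ a b : ZMod 2, (a * b).val = a.val * b.val := by decide
  have hsum : ∑ d, l d = w * w := by
    simp only [l, hvm]
    rw [Finset.sum_comm]
    simp only [← Finset.mul_sum]
    rw [hw, Finset.sum_mul]
    refine Finset.sum_congr rfl fun k _ => ?_
    exact congrArg (fun z => (v k).val * z)
      (Fintype.sum_equiv (Equiv.addLeft k) (fun d => (v (k + d)).val) (fun d => (v d).val)
        (fun i => rfl))
  have h0 : l 0 = w := by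
    simp only [l, add_zero]
    rw [hw]
    refine Finset.sum_congr rfl fun k _ => ?_
    generalize v k = a
    revert a; decide
  have hneg : ∀ d, l (-d) = l d := by
    intro d
    simp only [l]
    refine Fintype.sum_equiv (Equiv.subRight d) _ _ (fun k => ?_)
    simp only [Equiv.subRight_apply, sub_add_cancel, ← sub_eq_add_neg]
    rw [mul_comm]
  let L : ℕ → ℕ := fun i => if h : i < 45 then l ⟨i, h⟩ else 0
  have hL : ∑ d, l d = ∑ i ∈ Finset.range 45, L i := by
    rw [← Fin.sum_univ_eq_sum_range]
    exact Finset.sum_congr rfl fun i _ => by simp [L]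
  have hL0 : L 0 = l 0 := rfl
  have gen : ∀ f : ℕ → ℕ, ∑ i ∈ Finset.range 45, f i = f 0 + ∑ i ∈ Finset.range 22, f (i + 1)
      + ∑ i ∈ Finset.range 22, f (44 - i) := by
    intro f
    simp only [Finset.sum_range_succ, Finset.sum_range_zero]
    norm_num
    ring
  have hLs : ∑ i ∈ Finset.range 22, L (44 - i) = ∑ i ∈ Finset.range 22, L (i + 1) := by
    refine Finset.sum_congr rfl fun i hi => ?_
    have hi := Finset.mem_range.1 hi
    simp only [L]
    rw [dif_pos (by omega), dif_pos (by omega), ← hneg]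
    refine congrArg l ?_
    rw [neg_eq_iff_add_eq_zero]
    apply Fin.ext
    rw [Fin.val_add]
    show (44 - i + (i + 1)) % 45 = 0
    omega
  have hpar : (∑ i ∈ Finset.range 22, L (i + 1)) % 2 = 0 := by
    rw [Finset.sum_nat_mod, Finset.sum_congr rfl (g := fun _ => 1)]
    · simp
    · intro i hi
      have hi := Finset.mem_range.1 hi
      simp only [L]
      rw [dif_pos (by omega)]
      exact hodd _ (by simp [Fin.ext_iff])
  have hsplit : ∑ d, l d = l 0 + 2 * ∑ i ∈ Finset.range 22, L (i + 1) := by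
    rw [hL, gen, hLs, hL0]; ring
  rw [hsum, h0] at hsplit
  obtain ⟨a, ha⟩ := heven
  rw [ha] at hsplit ⊢
  obtain ⟨b, hb⟩ : ∃ b, ∑ i ∈ Finset.range 22, L (i + 1) = 2 * b :=
    Nat.dvd_of_mod_eq_zero hpar
  rw [hb] at hsplit
  have : 2 * (a * a) = a + 2 * b := by nlinarith
  omega

end W92

theorem weight_enum_bordered_dcc_92 (B : Matrix (Fin 46) (Fin 46) (ZMod 2))
    (hB : IsBorderMatrix (n := 45) B) (hsd : IsSelfDual (borderedDCC (n := 45) B))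
    (hmin : MinWeightIs (borderedDCC (n := 45) B) 16) :
    (weightEnum (borderedDCC (n := 45) B) 18 : ℤ) =
      121296 - 2 * ((weightEnum (borderedDCC (n := 45) B) 16 : ℤ) - 4692) := by
  classical
  obtain ⟨h00, h0j, hi0, R, ⟨v, rfl⟩, hR⟩ := hB
  set C := borderedDCC (n := 45) B with hCdef
  let row : Fin 46 → (Fin 46 ⊕ Fin 46 → ZMod 2) := fun i =>
    Sum.elim (fun j => if j = i then (1 : ZMod 2) else 0) (B i)
  have hrow : ∀ i, row i ∈ C := fun i => Submodule.subset_span ⟨i, rfl⟩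
  have horth : ∀ i j, dot (row i) (row j) = 0 := fun i j => (hsd _).1 (hrow i) _ (hrow j)
  have hdot : ∀ i j, dot (row i) (row j) = (if i = j then 1 else 0) + ∑ k, B i k * B j k := by
    intro i j
    simp [dot, row, Fintype.sum_sum_type, eq_comm]
  have hwt : ∀ i, hammingNorm (row i) = 1 + ∑ k, (B i k).val := by
    intro i
    rw [W92.wt_eq, Fintype.sum_sum_type]
    refine congrArg (fun z => z + ∑ k, (B i k).val) ?_
    simp only [row, Sum.elim_inl]
    rw [Finset.sum_eq_single i]
    · simp [ZMod.val_one]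
    · intro b _ hb; simp [hb]
    · simp
  have hBs : ∀ i k : Fin 45, B i.succ k.succ = v (i - k) := fun i k => by
    rw [hR]; rfl
  have hval1 : (1 : ZMod 2).val = 1 := rfl
  have hwt0 : hammingNorm (row 0) = 46 := by
    rw [hwt, Fin.sum_univ_succ, h00, Finset.sum_congr rfl (g := fun _ => 1)]
    · simp
    · intro k _
      rw [h0j _ (Fin.succ_ne_zero k), hval1]
  have hwts : ∀ i : Fin 45, hammingNorm (row i.succ) = 2 + ∑ k, (v k).val := by
    intro i
    rw [hwt, Fin.sum_univ_succ, hi0 _ (Fin.succ_ne_zero i), hval1, ← add_assoc]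
    have : ∑ k : Fin 45, (B i.succ k.succ).val = ∑ k, (v k).val := by
      refine Fintype.sum_equiv (Equiv.subLeft i) _ _ (fun k => ?_)
      rw [hBs]; rfl
    rw [this]
  have hself : ∀ x ∈ C, 2 ∣ hammingNorm x := by
    intro x hx
    have h := W92.even_of_dot x x ((hsd x).1 hx x hx)
    have h2 : ∀ a : ZMod 2, (a * a).val = a.val := by decide
    rw [W92.wt_eq]
    simpa only [h2] using h
  have hw4 : (∑ k, (v k).val) % 4 = 0 := by
    apply W92.circ
    · have := hself _ (hrow (Fin.succ 0))
      rw [hwts] at this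
      omega
    · intro d hd
      have h := horth (Fin.succ 0) (Fin.succ d)
      have hne : (Fin.succ 0 : Fin 46) ≠ Fin.succ d := fun h => hd (Fin.succ_injective _ h).symm
      rw [hdot, if_neg hne, zero_add, Fin.sum_univ_succ, hi0 _ (Fin.succ_ne_zero _),
        hi0 _ (Fin.succ_ne_zero _)] at h
      have h2 : ∑ k : Fin 45, B (Fin.succ 0) k.succ * B d.succ k.succ = ∑ k, v k * v (k + d) := by
        refine Fintype.sum_equiv (Equiv.subLeft 0) _ _ (fun k => ?_)
        rw [hBs, hBs]
        simp only [Equiv.subLeft_apply]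
        have e : d - k = 0 - k + d := by abel
        rw [e]
      rw [h2] at h
      have h3 : ((∑ k, (v k * v (k + d)).val : ℕ) : ZMod 2) = ∑ k, v k * v (k + d) := by
        push_cast
        simp
      rw [← h3] at h
      have h4 : ((1 + ∑ k, (v k * v (k + d)).val : ℕ) : ZMod 2) = 0 := by
        push_cast
        push_cast at h
        simpa using h
      rw [ZMod.natCast_eq_zero_iff] at h4
      omega
  let s : Fin 46 ⊕ Fin 46 → ZMod 2 := Pi.single (Sum.inl 0) 1 + Pi.single (Sum.inr 0) 1
  have hsdot : ∀ c, dot s c = c (Sum.inl 0) + c (Sum.inr 0) := by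
    intro c
    rw [W92.dot_add_left, W92.dot_single, W92.dot_single]
  refine W92.final (by simp) C hsd hmin.2 s ?_ ?_
  · have h := W92.wt_add (Pi.single (Sum.inl 0) 1 : Fin 46 ⊕ Fin 46 → ZMod 2)
      (Pi.single (Sum.inr 0) 1)
    rw [W92.norm_single, W92.norm_single] at h
    have h0 : ∑ i, ((Pi.single (Sum.inl 0) 1 : Fin 46 ⊕ Fin 46 → ZMod 2) i *
        (Pi.single (Sum.inr 0) 1 : Fin 46 ⊕ Fin 46 → ZMod 2) i).val = 0 := by
      apply Finset.sum_eq_zero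
      rintro (i | i) _ <;> simp
    rw [h0] at h
    exact h
  · have key : ∀ c ∈ C, c ∈ C ∧ hammingNorm c % 4 = 2 * (dot s c).val := by
      intro c hc
      have hc' : c ∈ Submodule.span (ZMod 2) (Set.range row) := hc
      clear hc
      induction hc' using Submodule.span_induction with
      | mem x hx =>
        obtain ⟨i, rfl⟩ := hx
        refine ⟨hrow i, ?_⟩
        rw [hsdot]
        refine Fin.cases ?_ (fun i => ?_) i
        · rw [hwt0]
          simp [row, h00, hval1]
        · rw [hwts]
          have : row i.succ (Sum.inl 0) + row i.succ (Sum.inr 0) = 1 := by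
            simp [row, hi0, (Fin.succ_ne_zero i).symm]
          rw [this, hval1]
          omega
      | zero =>
        refine ⟨C.zero_mem, ?_⟩
        simp [dot]
      | add x y _ _ hx hy =>
        refine ⟨C.add_mem hx.1 hy.1, ?_⟩
        have h1 := W92.wt_add x y
        have h2 := W92.even_of_dot x y ((hsd x).1 hx.1 y hy.1)
        have h3 := hx.2
        have h4 := hy.2
        have h5 : ∀ a b : ZMod 2, (a + b).val = (a.val + b.val) % 2 := by decide
        rw [W92.dot_add_right, h5]
        have h6 := ZMod.val_lt (dot s x)
        have h7 := ZMod.val_lt (dot s y)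
        omega
      | smul a x _ hx =>
        have h5 : ∀ a : ZMod 2, a = 0 ∨ a = 1 := by decide
        rcases h5 a with rfl | rfl
        · rw [zero_smul]
          refine ⟨C.zero_mem, ?_⟩
          simp [dot]
        · rw [one_smul]
          exact hx
    exact fun c hc => (key c hc).2
end

section
/- Every bordered double circulant doubly even self-dual binary code of length 96 with minimum weight 16 has automorphism group of order exactly 94, where the automorphism group is the group of coordinate permutations mapping the code onto itself. -/
section Helpers

abbrev XX := Fin 48 ⊕ Fin 48
abbrev ZZ := ZMod 47

def ia : XX := Sum.inl 0
def ib : XX := Sum.inr 0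
def px (i : ZZ) : XX := Sum.inl (Fin.succ (n := 47) i)
def py (i : ZZ) : XX := Sum.inr (Fin.succ (n := 47) i)

lemma pt_cases (z : XX) : z = ia ∨ z = ib ∨ (∃ i, z = px i) ∨ ∃ i, z = py i := by
  rcases z with z | z
  · induction z using Fin.cases with
    | zero => exact Or.inl rfl
    | succ i => exact Or.inr (Or.inr (Or.inl ⟨i, rfl⟩))
  · induction z using Fin.cases with
    | zero => exact Or.inr (Or.inl rfl)
    | succ i => exact Or.inr (Or.inr (Or.inr ⟨i, rfl⟩))

lemma pt_ext {α : Type*} {f g : XX → α} (h1 : f ia = g ia) (h2 : f ib = g ib)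
    (h3 : ∀ i, f (px i) = g (px i)) (h4 : ∀ i, f (py i) = g (py i)) : f = g := by
  funext z
  rcases pt_cases z with rfl | rfl | ⟨i, rfl⟩ | ⟨i, rfl⟩
  · exact h1
  · exact h2
  · exact h3 i
  · exact h4 i

@[simp] lemma px_inj {i j : ZZ} : px i = px j ↔ i = j := by
  constructor
  · intro h
    have h1 := Sum.inl.inj h
    exact Fin.succ_injective 47 h1
  · rintro rfl; rfl
@[simp] lemma py_inj {i j : ZZ} : py i = py j ↔ i = j := by
  constructor
  · intro h
    have h1 := Sum.inr.inj h
    exact Fin.succ_injective 47 h1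
  · rintro rfl; rfl
@[simp] lemma px_ne_py {i j : ZZ} : px i ≠ py j := by intro h; cases h
@[simp] lemma py_ne_px {i j : ZZ} : py i ≠ px j := by intro h; cases h
@[simp] lemma ia_ne_ib : ia ≠ ib := by intro h; cases h
@[simp] lemma ib_ne_ia : ib ≠ ia := by intro h; cases h
@[simp] lemma px_ne_ib {i : ZZ} : px i ≠ ib := by intro h; cases h
@[simp] lemma ib_ne_px {i : ZZ} : ib ≠ px i := by intro h; cases h
@[simp] lemma py_ne_ia {i : ZZ} : py i ≠ ia := by intro h; cases h
@[simp] lemma ia_ne_py {i : ZZ} : ia ≠ py i := by intro h; cases h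
@[simp] lemma px_ne_ia {i : ZZ} : px i ≠ ia := by
  intro h; exact Fin.succ_ne_zero _ (Sum.inl.inj h)
@[simp] lemma ia_ne_px {i : ZZ} : ia ≠ px i := fun h => px_ne_ia h.symm
@[simp] lemma py_ne_ib {i : ZZ} : py i ≠ ib := by
  intro h; exact Fin.succ_ne_zero _ (Sum.inr.inj h)
@[simp] lemma ib_ne_py {i : ZZ} : ib ≠ py i := fun h => py_ne_ib h.symm

lemma sum_pt {M : Type*} [AddCommMonoid M] (f : XX → M) :
    ∑ z, f z = (f ia + ∑ i : ZZ, f (px i)) + (f ib + ∑ i : ZZ, f (py i)) := by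
  rw [Fintype.sum_sum_type, Fin.sum_univ_succ, Fin.sum_univ_succ]
  rfl

/-- vector from its four parts -/
def vec (α β : ZMod 2) (f g : ZZ → ZMod 2) : XX → ZMod 2 :=
  Sum.elim (Fin.cons (n := 47) α f) (Fin.cons (n := 47) β g)
@[simp] lemma vec_ia (α β f g) : vec α β f g ia = α := rfl
@[simp] lemma vec_ib (α β f g) : vec α β f g ib = β := rfl
@[simp] lemma vec_px (α β f g i) : vec α β f g (px i) = f i := rfl
@[simp] lemma vec_py (α β f g i) : vec α β f g (py i) = g i := rfl

/-- number of nonzero entries -/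
def wt (f : ZZ → ZMod 2) : ℕ := ∑ i, if f i = 0 then 0 else 1

lemma hn_eq (u : XX → ZMod 2) : hammingNorm u =
    ((if u ia = 0 then 0 else 1) + wt (fun i => u (px i))) +
    ((if u ib = 0 then 0 else 1) + wt (fun i => u (py i))) := by
  have h : hammingNorm u = ∑ z, if u z = 0 then 0 else 1 := by
    simp only [hammingNorm, Finset.card_filter]
    apply Finset.sum_congr rfl
    intro z _
    by_cases h : u z = 0 <;> simp [h]
  rw [h, sum_pt]; rfl

lemma dot_eq (u w : XX → ZMod 2) : dot u w =
    (u ia * w ia + ∑ i, u (px i) * w (px i)) + (u ib * w ib + ∑ i, u (py i) * w (py i)) := by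
  rw [dot, sum_pt]

/-- permutation of the points -/
def ext0 (f : ZZ ≃ ZZ) : Fin 48 ≃ Fin 48 where
  toFun := Fin.cases (n := 47) 0 (fun i => Fin.succ (n := 47) (f i))
  invFun := Fin.cases (n := 47) 0 (fun i => Fin.succ (n := 47) (f.symm i))
  left_inv := by
    intro z
    induction z using Fin.cases with
    | zero => rfl
    | succ i =>
      exact congrArg (Fin.succ (n := 47)) (f.symm_apply_apply i)
  right_inv := by
    intro z
    induction z using Fin.cases with
    | zero => rfl
    | succ i =>
      exact congrArg (Fin.succ (n := 47)) (f.apply_symm_apply i)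

/-- translations -/
def tr (c : ZZ) : Equiv.Perm XX := Equiv.sumCongr (ext0 (Equiv.addRight c)) (ext0 (Equiv.addRight c))
@[simp] lemma tr_ia (c) : tr c ia = ia := rfl
@[simp] lemma tr_ib (c) : tr c ib = ib := rfl
@[simp] lemma tr_px (c i) : tr c (px i) = px (i + c) := rfl
@[simp] lemma tr_py (c i) : tr c (py i) = py (i + c) := rfl

/-- the involution -/
def tau : Equiv.Perm XX := (Equiv.sumComm _ _).trans
  (Equiv.sumCongr (ext0 (Equiv.neg ZZ)) (ext0 (Equiv.neg ZZ)))
@[simp] lemma tau_ia : tau ia = ib := rfl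
@[simp] lemma tau_ib : tau ib = ia := rfl
@[simp] lemma tau_px (i) : tau (px i) = py (-i) := rfl
@[simp] lemma tau_py (i) : tau (py i) = px (-i) := rfl

lemma perm_ext {f g : Equiv.Perm XX} (h1 : f ia = g ia) (h2 : f ib = g ib)
    (h3 : ∀ i, f (px i) = g (px i)) (h4 : ∀ i, f (py i) = g (py i)) : f = g :=
  Equiv.coe_fn_injective (pt_ext h1 h2 h3 h4)

lemma tr_add (c d : ZZ) : tr (c + d) = tr c * tr d := by
  apply perm_ext <;> simp [Equiv.Perm.mul_apply] <;> intro i <;> ring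
lemma tr_zero : tr 0 = 1 := by
  apply perm_ext <;> simp
lemma tr_nat (n : ℕ) : tr n = tr 1 ^ n := by
  induction n with
  | zero => simp [tr_zero]
  | succ n ih => rw [Nat.cast_succ, tr_add, ih, pow_succ]
lemma tr_neg (c : ZZ) : tr (-c) = (tr c)⁻¹ := by
  apply eq_inv_of_mul_eq_one_left
  rw [← tr_add, neg_add_cancel, tr_zero]
lemma tr_mem (c : ZZ) : tr c ∈ Subgroup.zpowers (tr 1) := by
  have : tr c = tr 1 ^ c.val := by rw [← tr_nat, ZMod.natCast_zmod_val]
  rw [this]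
  exact Subgroup.npow_mem_zpowers _ _
lemma mem_P {h : Equiv.Perm XX} : h ∈ Subgroup.zpowers (tr 1) ↔ ∃ c, h = tr c := by
  constructor
  · intro hh
    rw [Subgroup.mem_zpowers_iff] at hh
    obtain ⟨k, rfl⟩ := hh
    refine ⟨(k : ZZ), ?_⟩
    induction k using Int.induction_on with
    | zero => simp [tr_zero]
    | succ n ih => rw [zpow_add_one, ih]; push_cast; rw [tr_add]
    | pred n ih => rw [zpow_sub_one, ih, sub_eq_add_neg]; push_cast; rw [tr_add, tr_neg 1]
  · rintro ⟨c, rfl⟩; exact tr_mem c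
lemma order_tr : orderOf (tr 1) = 47 := by
  have : Fact (Nat.Prime 47) := ⟨by norm_num⟩
  apply orderOf_eq_prime
  · rw [← tr_nat]
    rw [show ((47 : ℕ) : ZZ) = 0 from rfl, tr_zero]
  · intro h
    have := congrArg (fun f => f (px 0)) h
    simp at this
lemma tau_tr : tau * tr 1 * tau⁻¹ = (tr 1)⁻¹ := by
  rw [mul_inv_eq_iff_eq_mul, ← tr_neg]
  apply perm_ext <;> simp [Equiv.Perm.mul_apply] <;> intro i <;> ring
lemma tau_tau : tau * tau = 1 := by
  apply perm_ext <;> simp [Equiv.Perm.mul_apply]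

/-- The facts about the code that are used. -/
structure Good (C : Submodule (ZMod 2) (XX → ZMod 2)) (v : ZZ → ZMod 2) : Prop where
  r0 : vec 1 0 (fun _ => 0) (fun _ => 1) ∈ C
  r : ∀ i, vec 0 1 (fun j => if j = i then 1 else 0) (fun j => v (i - j)) ∈ C
  det : ∀ u ∈ C, u ia = 0 → (∀ i, u (px i) = 0) → u = 0
  sd : IsSelfDual C
  de : ∀ x ∈ C, hammingNorm x % 4 = 0
  mw : ∀ x ∈ C, x ≠ 0 → 16 ≤ hammingNorm x
  trm : ∀ u ∈ C, u ∘ tr 1 ∈ C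
  taum : ∀ u ∈ C, u ∘ tau ∈ C

section
lemma mem_bdcc (B : Matrix (Fin 48) (Fin 48) (ZMod 2)) (P : (XX → ZMod 2) → Prop)
    (h0 : P 0) (ha : ∀ u w, P u → P w → P (u + w))
    (hr : ∀ i : Fin 48, P (Sum.elim (fun j => if j = i then (1 : ZMod 2) else 0) (B i)))
    (u : XX → ZMod 2) (hu : u ∈ borderedDCC (n := 47) B) : P u := by
  unfold borderedDCC at hu
  induction hu using Submodule.span_induction with
  | mem x hx => obtain ⟨i, rfl⟩ := hx; exact hr i
  | zero => exact h0
  | add x y _ _ hx hy => exact ha _ _ hx hy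
  | smul a x _ hx =>
    have h2 : a = 0 ∨ a = 1 := by revert a; decide
    rcases h2 with rfl | rfl
    · rw [zero_smul]; exact h0
    · rw [one_smul]; exact hx

lemma good_of (B : Matrix (Fin 48) (Fin 48) (ZMod 2))
    (hB : IsBorderMatrix (n := 47) B) (hsd : IsSelfDual (borderedDCC (n := 47) B))
    (hde : ∀ x ∈ borderedDCC (n := 47) B, hammingNorm x % 4 = 0)
    (hmin : MinWeightIs (borderedDCC (n := 47) B) 16) :
    ∃ v, Good (borderedDCC (n := 47) B) v := by
  obtain ⟨h00, h0j, hi0, R, ⟨v', rfl⟩, hR⟩ := hB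
  obtain ⟨v, hv⟩ : ∃ v : ZZ → ZMod 2, ∀ i j : ZZ,
      B (Fin.succ (n := 47) i) (Fin.succ (n := 47) j) = v (i - j) := ⟨v', hR⟩
  have row0 : Sum.elim (fun j => if j = 0 then (1 : ZMod 2) else 0) (B 0)
      = vec 1 0 (fun _ => 0) (fun _ => 1) := by
    apply pt_ext
    · rfl
    · exact h00
    · intro i; rfl
    · intro i; exact h0j _ (Fin.succ_ne_zero _)
  have rowi : ∀ i : ZZ, Sum.elim (fun j => if j = Fin.succ (n := 47) i then (1 : ZMod 2) else 0)
      (B (Fin.succ (n := 47) i))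
      = vec 0 1 (fun j => if j = i then 1 else 0) (fun j => v (i - j : ZZ)) := by
    intro i
    apply pt_ext
    · rfl
    · exact hi0 _ (Fin.succ_ne_zero _)
    · intro j
      show (if Fin.succ (n := 47) j = Fin.succ (n := 47) i then (1 : ZMod 2) else 0) = if j = i then 1 else 0
      by_cases hij : j = i
      · subst hij; simp
      · rw [if_neg hij, if_neg]
        intro h; exact hij (Fin.succ_injective 47 h)
    · intro j; exact hv i j
  have r0 : vec 1 0 (fun _ => 0) (fun _ => 1) ∈ borderedDCC (n := 47) B := by
    rw [← row0]; exact Submodule.subset_span ⟨0, rfl⟩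
  have ri : ∀ i : ZZ, vec 0 1 (fun j => if j = i then 1 else 0) (fun j => v (i - j : ZZ)) ∈
      borderedDCC (n := 47) B := by
    intro i
    rw [← rowi]; exact Submodule.subset_span ⟨Fin.succ (n := 47) i, rfl⟩
  have ind : ∀ (P : (XX → ZMod 2) → Prop) (_ : P 0) (_ : ∀ u w, P u → P w → P (u + w))
      (_ : P (vec 1 0 (fun _ => 0) (fun _ => 1)))
      (_ : ∀ i : ZZ, P (vec 0 1 (fun j => if j = i then 1 else 0) (fun j => v (i - j : ZZ)))),
      ∀ u ∈ borderedDCC (n := 47) B, P u := by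
    intro P h0 ha hr0 hri
    apply mem_bdcc B P h0 ha
    intro i
    induction i using Fin.cases with
    | zero => rw [row0]; exact hr0
    | succ i => exact (congrArg P (rowi i)).mpr (hri i)
  refine ⟨v, r0, ri, ?_, hsd, hde, hmin.2, ?_, ?_⟩
  · intro u hu h1 h2
    have key := ind (fun u => u ib = ∑ i, u (px i) ∧
      ∀ j, u (py j) = u ia + ∑ i : ZZ, u (px i) * v (i - j : ZZ)) (by simp) (by
        rintro u w ⟨a1, a2⟩ ⟨b1, b2⟩
        refine ⟨?_, fun j => ?_⟩
        · simp [a1, b1, Finset.sum_add_distrib]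
        · simp only [Pi.add_apply, a2, b2, add_mul, Finset.sum_add_distrib]; ring)
        (by simp) (by intro i; simp) u hu
    apply pt_ext
    · exact h1
    · rw [key.1]; simp [h2]
    · exact h2
    · intro j; rw [key.2]; simp [h1, h2]
  · apply ind (fun u => u ∘ tr 1 ∈ borderedDCC (n := 47) B)
    · exact Submodule.zero_mem _
    · intro u w hu hw; exact Submodule.add_mem _ hu hw
    · convert r0 using 1
      apply pt_ext <;> simp
    · intro i
      convert ri (i - 1) using 1
      apply pt_ext
      · simp
      · simp
      · intro j; simp [eq_sub_iff_add_eq]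
      · intro j; simp; congr 1; ring
  · apply ind (fun u => u ∘ tau ∈ borderedDCC (n := 47) B)
    · exact Submodule.zero_mem _
    · intro u w hu hw; exact Submodule.add_mem _ hu hw
    · rw [hsd]
      apply ind
      · simp [dot]
      · intro u w hu hw
        simp only [dot, Pi.add_apply, mul_add, Finset.sum_add_distrib] at hu hw ⊢
        rw [hu, hw]; rfl
      · rw [dot_eq]; simp
      · intro i; rw [dot_eq]; simp; decide
    · intro i
      rw [hsd]
      apply ind
      · simp [dot]
      · intro u w hu hw
        simp only [dot, Pi.add_apply, mul_add, Finset.sum_add_distrib] at hu hw ⊢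
        rw [hu, hw]; rfl
      · rw [dot_eq]; simp [neg_eq_iff_eq_neg]; decide
      · intro k; rw [dot_eq]; simp [neg_eq_iff_eq_neg, add_comm i k]
        exact CharTwo.add_self_eq_zero _

end

section
set_option maxRecDepth 100000 in
lemma pow_two_dec : ∀ m : ZZ, m ≠ 0 → m ≠ 1 → m ≠ -1 → ∃ n : Fin 47, m ^ n.val = 2 := by decide +kernel
def isq (t : ZZ) : Bool := t.val ∈ [1, 2, 3, 4, 6, 7, 8, 9, 12, 14, 16, 17, 18, 21, 24, 25, 27, 28, 32, 34, 36, 37, 42]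
set_option maxRecDepth 100000 in
lemma isq_dec : ∀ t : ZZ, t ≠ 0 → if isq t then ∃ n : Fin 23, t = 2 ^ n.val else ∃ n : Fin 23, t = 2 ^ n.val * (-1) := by decide +kernel
set_option maxRecDepth 100000 in
lemma wt_dec : ∀ α β γ : ZMod 2, wt (fun t => if t = 0 then α else if isq t then β else γ) % 4 = 2 → α = 0 ∧ β = 1 ∧ γ = 1 := by
  unfold wt
  decide +kernel

lemma zz47 : Nat.Prime 47 := by norm_num
instance fact47 : Fact (Nat.Prime 47) := ⟨zz47⟩

lemma z2 (a : ZMod 2) : a = 0 ∨ a = 1 := by revert a; decide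

lemma wt_reindex (e : ZZ ≃ ZZ) (f : ZZ → ZMod 2) : wt (fun t => f (e t)) = wt f := by
  unfold wt
  exact Equiv.sum_comp e (fun i => if f i = 0 then 0 else 1)

lemma vfix_neg (w : ZZ → ZMod 2) (hw : ∀ t, w (-t) = w t)
    (hc : ∀ e, e ≠ 0 → ∑ j, w j * w (j + e) = 1) (t : ZZ) (ht : t ≠ 0) : w t = 1 := by
  have h2t : 2 * t ≠ 0 := mul_ne_zero (by decide) ht
  have h := hc (2 * t) h2t
  rw [← Finset.add_sum_erase _ _ (Finset.mem_univ (-t))] at h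
  have h0 : ∑ x ∈ Finset.univ.erase (-t), w x * w (x + 2 * t) = 0 := by
    apply Finset.sum_involution (fun x _ => -x - 2 * t)
    · intro a _
      have h1 : w (-a - 2 * t) = w (a + 2 * t) := by rw [← hw]; congr 1; ring
      have h2 : w (-a - 2 * t + 2 * t) = w a := by rw [← hw]; congr 1; ring
      rw [h1, h2, mul_comm (w (a + 2 * t))]
      exact CharTwo.add_self_eq_zero _
    · intro a ha _ h
      apply (Finset.mem_erase.mp ha).1
      have : (2 : ZZ) * (a + t) = 0 := by linear_combination -h
      rcases mul_eq_zero.mp this with h | h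
      · exact absurd h (by decide)
      · linear_combination h
    · intro a ha
      rw [Finset.mem_erase]
      refine ⟨?_, Finset.mem_univ _⟩
      intro h
      apply (Finset.mem_erase.mp ha).1
      linear_combination -h
    · intro a _; ring
  rw [h0, add_zero, hw, show -t + 2 * t = t by ring] at h
  rcases z2 (w t) with h1 | h1
  · rw [h1] at h; simp at h
  · exact h1

lemma vfix (v : ZZ → ZMod 2) (hwt : wt v % 4 = 2)
    (hc : ∀ e, e ≠ 0 → ∑ j, v j * v (j + e) = 1)
    (hn : ¬ ∃ c, ∀ t, t ≠ c → v t = 1) (m d : ZZ) (hm : m ≠ 0)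
    (h : ∀ t, v (m * t + d) = v t) : m = 1 ∧ d = 0 := by
  by_cases hm1 : m = 1
  · refine ⟨hm1, ?_⟩
    by_contra hd
    subst hm1
    simp only [one_mul] at h
    have hn : ∀ n : ℕ, v (n * d) = v 0 := by
      intro n
      induction n with
      | zero => simp
      | succ n ih =>
        have e : ((n + 1 : ℕ) : ZZ) * d = n * d + d := by push_cast; ring
        rw [e, h, ih]
    have hcst : ∀ t, v t = v 0 := by
      intro t
      rw [← hn (t / d).val, ZMod.natCast_zmod_val, div_mul_cancel₀ _ hd]
    have : v = fun _ => v 0 := funext hcst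
    rw [this] at hwt
    generalize v 0 = a at hwt
    rcases z2 a with rfl | rfl
    · simp [wt] at hwt
    · simp [wt] at hwt
  · exfalso
    have h1m : 1 - m ≠ 0 := fun h => hm1 (by linear_combination -h)
    obtain ⟨c, hcm⟩ : ∃ c : ZZ, c * (1 - m) = d := ⟨d / (1 - m), div_mul_cancel₀ _ h1m⟩
    obtain ⟨w, hw⟩ : ∃ w : ZZ → ZMod 2, w = fun t => v (t + c) := ⟨_, rfl⟩
    have hwm : ∀ t, w (m * t) = w t := by
      intro t
      rw [hw]
      show v _ = v _
      rw [← h (t + c)]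
      have e : m * (t + c) + d = m * t + c := by rw [← hcm]; ring
      rw [e]
    have hwc : ∀ e, e ≠ 0 → ∑ j, w j * w (j + e) = 1 := by
      intro e he
      rw [← hc e he, ← Equiv.sum_comp (Equiv.addRight c) (fun j => v j * v (j + e))]
      apply Finset.sum_congr rfl
      intro j _
      simp only [hw, Equiv.coe_addRight]
      rw [add_right_comm j e c]
    have hww : wt w % 4 = 2 := by
      rw [← hwt, hw]
      exact congrArg (· % 4) (wt_reindex (Equiv.addRight c) v)
    apply hn
    refine ⟨c, fun t ht => ?_⟩
    have ht' : t - c ≠ 0 := sub_ne_zero.mpr ht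
    suffices hs : ∀ t, t ≠ 0 → w t = 1 by
      have := hs (t - c) ht'
      simpa [hw] using this
    by_cases hmn : m = -1
    · intro t ht
      apply vfix_neg w _ hwc t ht
      intro t; rw [← hwm t, hmn, neg_one_mul]
    · obtain ⟨n, hn⟩ := pow_two_dec m hm hm1 hmn
      have hp : ∀ (n : ℕ) t, w (m ^ n * t) = w t := by
        intro n
        induction n with
        | zero => simp
        | succ n ih =>
          intro t
          have e : m ^ (n + 1) * t = m * (m ^ n * t) := by ring
          rw [e, hwm, ih]
      have h2 : ∀ t, w (2 * t) = w t := by intro t; rw [← hn]; exact hp _ t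
      have hp2 : ∀ (n : ℕ) t, w (2 ^ n * t) = w t := by
        intro n
        induction n with
        | zero => simp
        | succ n ih =>
          intro t
          have e : (2 : ZZ) ^ (n + 1) * t = 2 * (2 ^ n * t) := by ring
          rw [e, h2, ih]
      have hf : w = fun t => if t = 0 then w 0 else if isq t then w 1 else w (-1) := by
        funext t
        by_cases ht : t = 0
        · simp [ht]
        · rw [if_neg ht]
          have hq := isq_dec t ht
          by_cases hqt : isq t = true
          · rw [if_pos hqt] at hq ⊢
            obtain ⟨n, hn⟩ := hq
            rw [← hp2 n 1, mul_one, ← hn]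
          · rw [if_neg hqt] at hq ⊢
            obtain ⟨n, hn⟩ := hq
            rw [← hp2 n (-1), ← hn]
      rw [hf] at hww
      obtain ⟨_, e1, e2⟩ := wt_dec _ _ _ hww
      intro t ht
      rw [hf]
      simp [ht, e1, e2]

/-- the automorphism group -/
def autG (C : Submodule (ZMod 2) (XX → ZMod 2)) : Subgroup (Equiv.Perm XX) where
  carrier := {σ | ∀ u, u ∘ σ ∈ C ↔ u ∈ C}
  one_mem' := by intro u; rfl
  mul_mem' := by
    intro a b ha hb u
    have h := hb (u ∘ a)
    rw [ha] at h
    exact h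
  inv_mem' := by
    intro a ha u
    have h := ha (u ∘ ⇑a⁻¹)
    rw [← h]
    have : (u ∘ ⇑a⁻¹) ∘ ⇑a = u := by funext z; simp
    rw [this]

lemma mem_autG_of (C : Submodule (ZMod 2) (XX → ZMod 2)) (σ : Equiv.Perm XX)
    (h : ∀ u ∈ C, u ∘ σ ∈ C) : σ ∈ autG C := by
  intro u
  refine ⟨fun hu => ?_, h u⟩
  have hk : ∀ k : ℕ, u ∘ ⇑(σ ^ (k + 1)) ∈ C := by
    intro k
    induction k with
    | zero => simpa using hu
    | succ k ih =>
      have := h _ ih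
      rw [pow_succ]
      exact this
  have h1 := hk (orderOf σ - 1)
  have : orderOf σ - 1 + 1 = orderOf σ := Nat.sub_add_cancel (orderOf_pos σ)
  rw [this, pow_orderOf_eq_one] at h1
  exact h1

lemma autGroupOrder_eq (C : Submodule (ZMod 2) (XX → ZMod 2)) :
    autGroupOrder C = Nat.card (autG C) := by
  unfold autGroupOrder
  apply Nat.card_congr
  apply Equiv.subtypeEquivRight
  intro σ
  constructor
  · intro h u
    constructor
    · intro hu
      rw [← h] at hu
      obtain ⟨w, hw, hwu⟩ := hu
      have : w = u := by
        funext z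
        have := congrFun hwu (σ⁻¹ z)
        simpa [LinearMap.funLeft_apply] using this
      rw [← this]; exact hw
    · intro hu
      rw [← h]
      exact ⟨u, hu, rfl⟩
  · intro h
    ext w
    constructor
    · rintro ⟨u, hu, rfl⟩
      exact (h u).mpr hu
    · intro hw
      refine ⟨w ∘ ⇑σ⁻¹, ?_, ?_⟩
      · exact ((autG C).inv_mem h w).mpr hw
      · funext z; simp [LinearMap.funLeft_apply]

section
variable {C : Submodule (ZMod 2) (XX → ZMod 2)} {v : ZZ → ZMod 2}

lemma Good.wt_v (g : Good C v) : wt v % 4 = 2 := by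
  have h := g.de _ (g.r 0)
  rw [hn_eq] at h
  simp only [vec_ia, vec_ib, vec_px, vec_py] at h
  have h1 : wt (fun j : ZZ => v (0 - j)) = wt v := wt_reindex (Equiv.subLeft 0) v
  have h2 : wt (fun j : ZZ => if j = 0 then (1 : ZMod 2) else 0) = 1 := by
    simp [wt]
  rw [h1, h2] at h
  simp at h
  omega

lemma Good.corr (g : Good C v) (e : ZZ) (he : e ≠ 0) : ∑ j, v j * v (j + e) = 1 := by
  have h := (g.sd _).mp (g.r 0) _ (g.r e)
  rw [dot_eq] at h
  simp only [vec_ia, vec_ib, vec_px, vec_py] at h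
  simp [he] at h
  rw [← Equiv.sum_comp (Equiv.neg ZZ)]
  simp only [Equiv.neg_apply]
  have : ∀ j : ZZ, v (-j) * v (-j + e) = v (-j) * v (e - j) := by
    intro j; rw [neg_add_eq_sub]
  simp only [this]
  generalize (∑ x : ZZ, v (-x) * v (e - x)) = a at h
  clear this he
  revert a; decide

lemma hn_le_four (u : XX → ZMod 2) (f g : ZZ → ZMod 2)
    (hu : u = vec 0 0 f g) (hf : wt f ≤ 2) (hg : wt g ≤ 2) : hammingNorm u ≤ 4 := by
  rw [hu, hn_eq]
  simp
  show wt f + wt g ≤ 4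
  omega

lemma wt_two (a b : ZZ) (f : ZZ → ZMod 2) (hf : ∀ t, t ≠ a → t ≠ b → f t = 0) : wt f ≤ 2 := by
  unfold wt
  calc ∑ i, (if f i = 0 then 0 else 1) ≤ ∑ i, ((if i = a then 1 else 0) + (if i = b then 1 else 0)) := by
        apply Finset.sum_le_sum
        intro i _
        by_cases h1 : i = a
        · split <;> simp [h1]
        · by_cases h2 : i = b
          · split <;> simp [h2]
          · simp [hf i h1 h2]
    _ = 2 := by rw [Finset.sum_add_distrib]; simp

lemma Good.no4 (g : Good C v) : ¬ ∃ c, ∀ t, t ≠ c → v t = 1 := by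
  rintro ⟨c, hc⟩
  have hs := C.add_mem (g.r 0) (g.r 1)
  have h16 := g.mw _ hs (by
    intro h
    have := congrFun h (px 0)
    simp at this)
  have : hammingNorm (vec 0 1 (fun j => if j = 0 then 1 else 0) (fun j => v (0 - j)) +
      vec 0 1 (fun j => if j = 1 then 1 else 0) (fun j => v (1 - j))) ≤ 4 := by
    apply hn_le_four _ (fun j => (if j = 0 then 1 else 0) + (if j = 1 then 1 else 0))
      (fun j => v (0 - j) + v (1 - j))
    · apply pt_ext
      · simp
      · simp; decide
      · intro i; simp
      · intro i; simp
    · apply wt_two 0 1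
      intro t h0 h1
      simp [h0, h1]
    · apply wt_two (0 - c) (1 - c)
      intro t h0 h1
      rw [hc, hc]
      · decide
      · intro h; apply h1; linear_combination -h
      · intro h; apply h0; linear_combination -h
  omega

lemma Good.norm (g : Good C v) (h : Equiv.Perm XX) (hC : h ∈ autG C) (hia : h ia = ia)
    (hN : h * tr 1 * h⁻¹ ∈ Subgroup.zpowers (tr 1)) : h ∈ Subgroup.zpowers (tr 1) := by
  obtain ⟨m, hm⟩ := mem_P.mp hN
  rw [mul_inv_eq_iff_eq_mul] at hm
  have hm0 : m ≠ 0 := by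
    rintro rfl
    rw [tr_zero, one_mul] at hm
    have : tr 1 = 1 := by simpa using hm
    have := congrArg (fun f => f (px 0)) this
    simp at this
  have hmn : ∀ (n : ℕ), h * tr n = tr (n * m) * h := by
    intro n
    induction n with
    | zero => simp [tr_zero]
    | succ n ih =>
      push_cast
      rw [tr_add, ← mul_assoc, ih, mul_assoc, hm, add_mul, one_mul, tr_add, mul_assoc]
  have hmc : ∀ c : ZZ, h * tr c = tr (c * m) * h := by
    intro c
    have := hmn c.val
    rwa [ZMod.natCast_zmod_val] at this
  have hmz : ∀ c z, h (tr c z) = tr (c * m) (h z) := by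
    intro c z
    exact congrArg (fun f => f z) (hmc c)
  have hib : h ib = ib := by
    have h1 := hmz 1 ib
    rw [tr_ib] at h1
    rcases pt_cases (h ib) with e | e | ⟨i, e⟩ | ⟨i, e⟩
    · exact absurd (h.injective (e.trans hia.symm)) ib_ne_ia
    · exact e
    · rw [e] at h1; simp [hm0] at h1
    · rw [e] at h1; simp [hm0] at h1
  have hpx : ∀ i, h (px i) = tr (i * m) (h (px 0)) := by
    intro i; rw [← hmz]; simp
  have hpy : ∀ i, h (py i) = tr (i * m) (h (py 0)) := by
    intro i; rw [← hmz]; simp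
  rcases pt_cases (h (px 0)) with e | e | ⟨a, e⟩ | ⟨a, e⟩
  · exact absurd (h.injective (e.trans hia.symm)) px_ne_ia
  · exact absurd (h.injective (e.trans hib.symm)) px_ne_ib
  · rcases pt_cases (h (py 0)) with e' | e' | ⟨b, e'⟩ | ⟨b, e'⟩
    · exact absurd (h.injective (e'.trans hia.symm)) py_ne_ia
    · exact absurd (h.injective (e'.trans hib.symm)) py_ne_ib
    · exfalso
      have : h (px ((b - a) / m)) = h (py 0) := by
        rw [hpx, e, e', div_mul_cancel₀ _ hm0]; simp
      exact px_ne_py (h.injective this)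
    · simp only [e, e', tr_px, tr_py] at hpx hpy
      have hv : ∀ t, v (m * t + (a - b)) = v t := by
        intro t
        have c1 := (hC _).mpr (g.r (a + t * m))
        have c2 := g.r t
        have c3 := C.add_mem c1 c2
        have h0 := g.det _ c3 (by simp [hia]) (by
          intro i
          simp only [Pi.add_apply, Function.comp, hpx, vec_px]
          by_cases hit : i = t
          · simp [hit, CharTwo.add_self_eq_zero]
          · simp [hit, hm0])
        have h1 := congrFun h0 (py 0)
        simp only [Pi.add_apply, Function.comp, hpy, vec_py, Pi.zero_apply] at h1
        have h2 := CharTwo.add_eq_zero.mp h1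
        rw [sub_zero] at h2
        rw [← h2]
        congr 1; ring
      obtain ⟨rfl, hab⟩ := vfix v g.wt_v g.corr g.no4 m (a - b) hm0 hv
      have hab' : a = b := sub_eq_zero.mp hab
      subst hab'
      rw [mem_P]
      refine ⟨a, ?_⟩
      apply perm_ext
      · simpa using hia
      · simpa using hib
      · intro i; rw [hpx]; simp [add_comm]
      · intro i; rw [hpy]; simp [add_comm]
  · exfalso
    rcases pt_cases (h (py 0)) with e' | e' | ⟨b, e'⟩ | ⟨b, e'⟩
    · exact absurd (h.injective (e'.trans hia.symm)) py_ne_ia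
    · exact absurd (h.injective (e'.trans hib.symm)) py_ne_ib
    · simp only [e, e', tr_px, tr_py] at hpx hpy
      have c1 := (hC _).mpr g.r0
      have c3 := g.de _ (C.add_mem c1 g.r0)
      rw [hn_eq] at c3
      simp only [Pi.add_apply, Function.comp, hpx, hpy, hia, hib, vec_px, vec_py, vec_ia, vec_ib] at c3
      simp [wt] at c3
      revert c3; decide
    · have : h (px ((b - a) / m)) = h (py 0) := by
        rw [hpx, e, e', div_mul_cancel₀ _ hm0]; simp
      exact px_ne_py (h.injective this)
end

end

section
open Subgroup in
lemma burn0 {G : Type*} [Group G] [Finite G] (s : G) (ho : orderOf s = 47)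
    (hN : ∀ h : G, h * s * h⁻¹ ∈ zpowers s → h ∈ zpowers s) :
    ∃ K : Subgroup G, K.Normal ∧ Nat.card K * 47 = Nat.card G ∧ ¬ 47 ∣ Nat.card K := by
  have hc : Nat.card (zpowers s) = 47 := by rw [Nat.card_zpowers, ho]
  have hn : normalizer (zpowers s : Set G) = zpowers s := by
    apply le_antisymm _ le_normalizer
    intro h hh
    apply hN
    exact (mem_normalizer_iff.mp hh s).mp (mem_zpowers s)
  have h1 := Sylow.card_quotient_normalizer_modEq_card_quotient (p := 47) (n := 1)
    (H := zpowers s) (by rw [hc]; rfl)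
  have h2 : comap (normalizer (zpowers s : Set G)).subtype (zpowers s) = ⊤ := by
    rw [eq_top_iff]
    rintro ⟨x, hx⟩ _
    rw [hn] at hx
    exact hx
  rw [h2] at h1
  have h3 : Nat.card (↥(normalizer (zpowers s : Set G)) ⧸ (⊤ : Subgroup (normalizer (zpowers s : Set G)))) = 1 := by
    exact Subgroup.index_top
  rw [h3] at h1
  have hidx : ¬ 47 ∣ (zpowers s).index := by
    intro hd
    have h4 : 1 ≡ 0 [MOD 47] := h1.trans ((Nat.modEq_zero_iff_dvd).mpr hd)
    revert h4; decide
  have hp : IsPGroup 47 (zpowers s) := IsPGroup.of_card (n := 1) (by rw [hc]; rfl)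
  let P := hp.toSylow hidx
  have hPc : (P : Subgroup G) = zpowers s := rfl
  have hP : normalizer (P : Set G) ≤ centralizer (P : Set G) := by
    have : (P : Set G) = (zpowers s : Set G) := rfl
    rw [this, hn]
    exact le_centralizer (zpowers s)
  have hcomp := MonoidHom.ker_transferSylow_isComplement' P hP
  refine ⟨(MonoidHom.transferSylow P hP).ker, inferInstance, ?_, ?_⟩
  · rw [← hcomp.card_mul_card]
    exact congrArg _ hc.symm
  · exact MonoidHom.not_dvd_card_ker_transferSylow P hP

open Subgroup in
lemma burn {G : Type*} [Group G] [Finite G] (H : Subgroup G) (s : G) (hs : s ∈ H)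
    (ho : orderOf s = 47)
    (hN : ∀ h ∈ H, h * s * h⁻¹ ∈ zpowers s → h ∈ zpowers s) :
    ∃ K : Subgroup G, K ≤ H ∧ (∀ k ∈ K, s * k * s⁻¹ ∈ K) ∧ Nat.card K * 47 = Nat.card H ∧
      ¬ 47 ∣ Nat.card K := by
  have hz : ∀ x : H, x ∈ zpowers (⟨s, hs⟩ : H) ↔ (x : G) ∈ zpowers s := by
    intro x
    simp only [mem_zpowers_iff]
    constructor
    · rintro ⟨k, rfl⟩; exact ⟨k, by simp⟩
    · rintro ⟨k, hk⟩; exact ⟨k, by ext; simpa using hk⟩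
  obtain ⟨K, hK, hc, hd⟩ := burn0 (⟨s, hs⟩ : H) (by rw [← ho]; exact orderOf_mk s hs)
    (by
      intro h hh
      rw [hz] at hh ⊢
      exact hN h h.2 hh)
  have hcard : Nat.card (K.map H.subtype) = Nat.card K :=
    Nat.card_congr (K.equivMapOfInjective _ H.subtype_injective).symm.toEquiv
  refine ⟨K.map H.subtype, map_subtype_le K, ?_, ?_, ?_⟩
  · rintro _ ⟨k, hk, rfl⟩
    exact ⟨⟨s, hs⟩ * k * ⟨s, hs⟩⁻¹, hK.conj_mem k hk _, rfl⟩
  · rw [hcard, hc]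
  · rw [hcard]; exact hd

open Subgroup Pointwise in
lemma invsyl {G : Type*} [Group G] [Finite G] (K : Subgroup G) (s : G)
    (hs : ∀ k ∈ K, s * k * s⁻¹ ∈ K) (ho : orderOf s = 47) (hd : ¬ 47 ∣ Nat.card K)
    (q : ℕ) (hq : q.Prime) :
    ∃ Q : Subgroup G, Q ≤ K ∧ (∀ k ∈ Q, s * k * s⁻¹ ∈ Q) ∧
      Nat.card Q = q ^ (Nat.card K).factorization q := by
  have : Fact q.Prime := ⟨hq⟩
  have hsn : s ∈ normalizer (K : Set G) := by
    have h1 : K.map (MulAut.conj s).toMonoidHom ≤ K := by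
      rintro _ ⟨k, hk, rfl⟩
      exact hs k hk
    have h2 : K.map (MulAut.conj s).toMonoidHom = K := by
      apply Subgroup.eq_of_le_of_card_ge h1
      rw [Nat.card_congr (K.equivMapOfInjective _ (MulAut.conj s).injective).symm.toEquiv]
    rw [mem_normalizer_iff]
    intro h
    refine ⟨hs h, fun hh => ?_⟩
    have hh' : s * h * s⁻¹ ∈ K.map (MulAut.conj s).toMonoidHom := by rw [h2]; exact hh
    obtain ⟨k, hk, hkk⟩ := hh'
    have : k = h := by simpa using hkk
    rw [← this]; exact hk
  let φ : MulAut K := K.normalizerMonoidHom ⟨s, hsn⟩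
  have hφ : φ ^ 47 = 1 := by
    show (K.normalizerMonoidHom ⟨s, hsn⟩) ^ 47 = 1
    rw [← map_pow]
    have : (⟨s, hsn⟩ : normalizer (K : Set G)) ^ 47 = 1 := by
      ext
      simp [← ho, pow_orderOf_eq_one]
    rw [this, map_one]
  have hp : IsPGroup 47 (zpowers φ) := by
    rintro ⟨x, hx⟩
    obtain ⟨k, rfl⟩ := mem_zpowers_iff.mp hx
    refine ⟨1, ?_⟩
    ext1
    show (φ ^ k) ^ (47 ^ 1) = 1
    rw [pow_one, ← zpow_natCast, zpow_comm, zpow_natCast, hφ, one_zpow]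
  have hnd : ¬ 47 ∣ Nat.card (Sylow q K) := by
    intro h
    apply hd
    obtain ⟨R⟩ : Nonempty (Sylow q K) := inferInstance
    exact h.trans ((R.card_dvd_index).trans (index_dvd_card _))
  obtain ⟨Q, hQ⟩ := hp.nonempty_fixed_point_of_prime_not_dvd_card (Sylow q K) hnd
  have hQφ : φ • Q = Q := hQ ⟨φ, mem_zpowers φ⟩
  refine ⟨(Q : Subgroup K).map K.subtype, map_subtype_le _, ?_, ?_⟩
  · rintro _ ⟨k, hk, rfl⟩
    refine ⟨φ k, ?_, rfl⟩
    have : φ • k ∈ φ • (Q : Subgroup K) := Subgroup.smul_mem_pointwise_smul _ _ _ hk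
    have h2 : φ • (Q : Subgroup K) = (Q : Subgroup K) := congrArg Sylow.toSubgroup hQφ
    rw [h2] at this
    exact this
  · rw [Nat.card_congr ((Q : Subgroup K).equivMapOfInjective _ K.subtype_injective).symm.toEquiv]
    exact Q.card_eq_multiplicity

open Equiv.Perm in
lemma sign_lem {Ω : Type*} [Fintype Ω] [DecidableEq Ω] (hΩ : Fintype.card Ω = 48)
    (s t : Equiv.Perm Ω) (hs : s ^ 47 = 1) (hs1 : s ≠ 1) (ht : t * t = 1)
    (hst : t * s * t⁻¹ = s⁻¹) : sign t = -1 := by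
  have ho : orderOf s = 47 := orderOf_eq_prime hs hs1
  have hcyc : s.IsCycle := isCycle_of_prime_order' (by rw [ho]; exact zz47) (by rw [ho, hΩ]; norm_num)
  have hsupp : s.support.card = 47 := by rw [← hcyc.orderOf, ho]
  have hsc : s.supportᶜ.card = 1 := by rw [Finset.card_compl, hsupp, hΩ]
  obtain ⟨o, hoo⟩ := Finset.card_eq_one.mp hsc
  have hfix : ∀ z, s z = z ↔ z = o := by
    intro z
    have : z ∈ s.supportᶜ ↔ z = o := by rw [hoo]; simp
    rw [← this]; simp
  have hts : t * s = s⁻¹ * t := mul_inv_eq_iff_eq_mul.mp hst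
  have htk : ∀ k : ℤ, t * s ^ k = s ^ (-k) * t := by
    intro k
    rw [← mul_inv_eq_iff_eq_mul, ← conj_zpow, hst, inv_zpow']
  have hto : t o = o := by
    rw [← hfix]
    have h1 := congrArg (fun f => f o) (htk (-1))
    simp only [mul_apply, neg_neg, zpow_one] at h1
    rw [← h1]
    congr 1
    rw [zpow_neg_one, inv_eq_iff_eq]
    exact ((hfix o).mpr rfl).symm
  obtain ⟨x, hx, hxy⟩ := hcyc
  have htx : s (t x) ≠ t x := by
    intro h
    rw [hfix] at h
    have : x = o := t.injective (h.trans hto.symm)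
    exact hx ((hfix x).mpr this)
  obtain ⟨j, hj⟩ := hxy htx
  have hmod : ∀ a b : ℤ, (s ^ a) x = (s ^ b) x ↔ (47 : ℤ) ∣ a - b := by
    intro a b
    constructor
    · intro h
      by_contra hnd
      have hco : IsCoprime (47 : ℤ) (a - b) :=
        (Prime.coprime_iff_not_dvd (Nat.prime_iff_prime_int.mp zz47)).mpr hnd
      obtain ⟨u, w, huw⟩ := hco
      have h1 : (s ^ (a - b)) x = x := by
        rw [sub_eq_neg_add, zpow_add, mul_apply, h, ← mul_apply, ← zpow_add]; simp
      have h2 : (s ^ (w * (a - b))) x = x := by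
        rw [mul_comm, zpow_mul]
        exact zpow_apply_eq_self_of_apply_eq_self h1 w
      apply hx
      have h3 : s ^ (1 : ℤ) = s ^ (w * (a - b)) := by
        rw [← huw, zpow_add, mul_comm u, zpow_mul, zpow_ofNat, hs, one_zpow, one_mul]
      rw [zpow_one] at h3
      rw [h3]; exact h2
    · rintro ⟨c, hc⟩
      have : a = 47 * c + b := by omega
      rw [this, zpow_add, zpow_mul, zpow_ofNat, hs, one_zpow, one_mul]
  have hfp : Fintype.card (Function.fixedPoints t) = 2 := by
    have hne : (s ^ (24 * j)) x ≠ o := by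
      intro h
      rw [← hfix, ← mul_apply, ← zpow_one_add] at h
      rw [hmod] at h
      omega
    rw [Fintype.card_subtype]
    have : (Finset.univ.filter fun z => z ∈ Function.fixedPoints t) = {(s ^ (24 * j)) x, o} := by
      ext z
      simp only [Finset.mem_filter, Finset.mem_univ, true_and, Finset.mem_insert,
        Finset.mem_singleton, Function.mem_fixedPoints, Function.IsFixedPt]
      by_cases hz : z = o
      · simp [hz, hto]
      · simp only [hz, or_false]
        obtain ⟨k, hk⟩ := hxy (fun h => hz ((hfix z).mp h))
        rw [← hk]
        have h1 := congrArg (fun f => f x) (htk k)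
        simp only [mul_apply] at h1
        rw [h1, ← hj, ← mul_apply, ← zpow_add, hmod, hmod]
        omega
    rw [this, Finset.card_pair hne]
  rw [sign_of_pow_two_eq_one (by rw [sq, ht]), hΩ, hfp]
  decide

end

section
open Classical in
lemma inv_card (O : Set XX) (h : ∀ z ∈ O, tr 1 z ∈ O) :
    O.ncard = (if ia ∈ O then 1 else 0) + (if px 0 ∈ O then 47 else 0) +
      ((if ib ∈ O then 1 else 0) + (if py 0 ∈ O then 47 else 0)) := by
  have hn : ∀ (n : ℕ) z, z ∈ O → tr n z ∈ O := by
    intro n z hz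
    rw [tr_nat]
    induction n with
    | zero => exact hz
    | succ n ih => rw [pow_succ']; exact h _ ih
  have hc : ∀ (c : ZZ) z, z ∈ O → tr c z ∈ O := by
    intro c z hz
    have := hn c.val z hz
    rwa [ZMod.natCast_zmod_val] at this
  have hx : ∀ i, px i ∈ O ↔ px 0 ∈ O := by
    intro i
    constructor
    · intro hi; have := hc (-i) _ hi; simpa using this
    · intro hi; have := hc i _ hi; simpa using this
  have hy : ∀ i, py i ∈ O ↔ py 0 ∈ O := by
    intro i
    constructor
    · intro hi; have := hc (-i) _ hi; simpa using this
    · intro hi; have := hc i _ hi; simpa using this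
  have h1 : O.ncard = ∑ z, if z ∈ O then 1 else 0 := by
    rw [Set.ncard_eq_toFinset_card', ← Finset.card_filter]
    congr 1
    ext z; simp
  rw [h1, sum_pt]
  simp only [hx, hy]
  simp

lemma trc_of {Q : Subgroup (Equiv.Perm XX)} (hs : ∀ k ∈ Q, tr 1 * k * (tr 1)⁻¹ ∈ Q) (c : ZZ)
    (k : Equiv.Perm XX) (hk : k ∈ Q) : tr c * k * (tr c)⁻¹ ∈ Q := by
  have hn : ∀ n : ℕ, tr n * k * (tr n)⁻¹ ∈ Q := by
    intro n
    rw [tr_nat]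
    induction n with
    | zero => simpa using hk
    | succ n ih =>
      have := hs _ ih
      have e : tr 1 ^ (n + 1) * k * (tr 1 ^ (n + 1))⁻¹ =
        tr 1 * (tr 1 ^ n * k * (tr 1 ^ n)⁻¹) * (tr 1)⁻¹ := by
        rw [pow_succ']; group
      rw [e]; exact this
  have := hn c.val
  rwa [ZMod.natCast_zmod_val] at this

lemma orbit_ncard {Q : Subgroup (Equiv.Perm XX)} {q n : ℕ} (hq : q.Prime)
    (hc : Nat.card Q = q ^ n) (z : XX) : ∃ e, (MulAction.orbit Q z).ncard = q ^ e := by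
  have : Fact q.Prime := ⟨hq⟩
  exact (IsPGroup.of_card hc).card_orbit z

lemma orb_ib {Q : Subgroup (Equiv.Perm XX)} (hs : ∀ k ∈ Q, tr 1 * k * (tr 1)⁻¹ ∈ Q)
    {q n : ℕ} (hq : q.Prime) (hc : Nat.card Q = q ^ n) (hia : ∀ k ∈ Q, k ia = ia)
    (k : Equiv.Perm XX) (hk : k ∈ Q) : k ib = ib := by
  obtain ⟨e, he⟩ := orbit_ncard hq hc ib
  have hmem : ib ∈ MulAction.orbit Q ib := MulAction.mem_orbit_self _
  have hnia : ia ∉ MulAction.orbit Q ib := by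
    rintro ⟨⟨k, hk⟩, hk'⟩
    have h1 : k ib = ia := hk'
    exact ib_ne_ia (k.injective (h1.trans (hia k hk).symm))
  have hst : ∀ z ∈ MulAction.orbit Q ib, tr 1 z ∈ MulAction.orbit Q ib := by
    rintro _ ⟨⟨k, hk⟩, rfl⟩
    refine ⟨⟨_, hs k hk⟩, ?_⟩
    show (tr 1 * k * (tr 1)⁻¹) ib = tr 1 (k ib)
    rw [← tr_neg]
    simp [Equiv.Perm.mul_apply]
  have h1 := inv_card _ hst
  rw [he, if_neg hnia, if_pos hmem] at h1
  have hone : q ^ e = 1 := by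
    have h48 : q ^ e ≠ 48 := by
      intro h
      have a2 : 2 ∣ q ^ e := by rw [h]; norm_num
      have a3 : 3 ∣ q ^ e := by rw [h]; norm_num
      have b2 := (Nat.prime_dvd_prime_iff_eq Nat.prime_two hq).mp (Nat.prime_two.dvd_of_dvd_pow a2)
      have b3 := (Nat.prime_dvd_prime_iff_eq Nat.prime_three hq).mp (Nat.prime_three.dvd_of_dvd_pow a3)
      omega
    have h95 : q ^ e ≠ 95 := by
      intro h
      have a2 : 5 ∣ q ^ e := by rw [h]; norm_num
      have a3 : 19 ∣ q ^ e := by rw [h]; norm_num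
      have p5 : Nat.Prime 5 := by norm_num
      have p19 : Nat.Prime 19 := by norm_num
      have b2 := (Nat.prime_dvd_prime_iff_eq p5 hq).mp (p5.dvd_of_dvd_pow a2)
      have b3 := (Nat.prime_dvd_prime_iff_eq p19 hq).mp (p19.dvd_of_dvd_pow a3)
      omega
    split_ifs at h1 <;> omega
  rw [hone] at he
  obtain ⟨w, hw⟩ := Set.ncard_eq_one.mp he
  rw [hw] at hmem
  have hkm : k ib ∈ MulAction.orbit Q ib := ⟨⟨k, hk⟩, rfl⟩
  rw [hw] at hkm
  exact hkm.trans hmem.symm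

lemma orb_tr {Q : Subgroup (Equiv.Perm XX)} (hs : ∀ k ∈ Q, tr 1 * k * (tr 1)⁻¹ ∈ Q)
    {q n : ℕ} (hq : q.Prime) (hq47 : q ≠ 47) (hc : Nat.card Q = q ^ n) (hia : ∀ k ∈ Q, k ia = ia)
    (k : Equiv.Perm XX) (hk : k ∈ Q) (z : XX) (hza : z ≠ ia) (hzb : z ≠ ib) (d : ZZ)
    (hd : k z = tr d z) : d = 0 := by
  by_contra hd0
  obtain ⟨e, he⟩ := orbit_ncard hq hc z
  have hnia : ia ∉ MulAction.orbit Q z := by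
    rintro ⟨⟨k, hk⟩, hk'⟩
    have h1 : k z = ia := hk'
    exact hza (k.injective (h1.trans (hia k hk).symm))
  have hnib : ib ∉ MulAction.orbit Q z := by
    rintro ⟨⟨k, hk⟩, hk'⟩
    have h1 : k z = ib := hk'
    exact hzb (k.injective (h1.trans (orb_ib hs hq hc hia k hk).symm))
  have hst : ∀ y ∈ MulAction.orbit Q z, tr d y ∈ MulAction.orbit Q z := by
    rintro _ ⟨⟨k', hk'⟩, rfl⟩
    refine ⟨⟨_, Q.mul_mem (trc_of hs d k' hk') hk⟩, ?_⟩
    show (tr d * k' * (tr d)⁻¹ * k) z = tr d (k' z)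
    simp [Equiv.Perm.mul_apply, hd]
  have hst1 : ∀ y ∈ MulAction.orbit Q z, tr 1 y ∈ MulAction.orbit Q z := by
    have hn : ∀ (n : ℕ), ∀ y ∈ MulAction.orbit Q z, tr (n * d) y ∈ MulAction.orbit Q z := by
      intro n
      induction n with
      | zero => intro y hy; simpa [tr_zero] using hy
      | succ n ih =>
        intro y hy
        have e : ((n + 1 : ℕ) : ZZ) * d = n * d + d := by push_cast; ring
        rw [e, tr_add]
        exact ih _ (hst y hy)
    intro y hy
    have := hn (1 / d).val y hy
    rwa [ZMod.natCast_zmod_val, div_mul_cancel₀ _ hd0] at this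
  have h1 := inv_card _ hst1
  rw [he, if_neg hnia, if_neg hnib] at h1
  have hpos : 0 < q ^ e := pow_pos hq.pos e
  have h47 : 47 ∣ q ^ e := by
    split_ifs at h1 <;> omega
  exact hq47 ((Nat.prime_dvd_prime_iff_eq zz47 hq).mp (zz47.dvd_of_dvd_pow h47)).symm

lemma orb_px {Q : Subgroup (Equiv.Perm XX)} (hs : ∀ k ∈ Q, tr 1 * k * (tr 1)⁻¹ ∈ Q)
    {q n : ℕ} (hq : q.Prime) (hq47 : q ≠ 47) (hc : Nat.card Q = q ^ n) (hia : ∀ k ∈ Q, k ia = ia)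
    (k : Equiv.Perm XX) (hk : k ∈ Q) (i : ZZ) :
    k (px i) = px i ∨ ∃ j, k (px i) = py j ∧ k (py j) = px i := by
  have hib := orb_ib hs hq hc hia k hk
  have hx : ∀ i j, k (px i) = px j → j = i := by
    intro i j h
    have := orb_tr hs hq hq47 hc hia k hk (px i) px_ne_ia px_ne_ib (j - i) (by rw [h]; simp)
    exact sub_eq_zero.mp this
  have hy : ∀ i j, k (py i) = py j → j = i := by
    intro i j h
    have := orb_tr hs hq hq47 hc hia k hk (py i) py_ne_ia py_ne_ib (j - i) (by rw [h]; simp)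
    exact sub_eq_zero.mp this
  rcases pt_cases (k (px i)) with e | e | ⟨j, e⟩ | ⟨j, e⟩
  · exact absurd (k.injective (e.trans (hia k hk).symm)) px_ne_ia
  · exact absurd (k.injective (e.trans hib.symm)) px_ne_ib
  · left; rw [e, hx i j e]
  · right
    refine ⟨j, e, ?_⟩
    rcases pt_cases (k (py j)) with e' | e' | ⟨l, e'⟩ | ⟨l, e'⟩
    · exact absurd (k.injective (e'.trans (hia k hk).symm)) py_ne_ia
    · exact absurd (k.injective (e'.trans hib.symm)) py_ne_ib
    · have hkk : (k * k) (px i) = tr (l - i) (px i) := by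
        rw [Equiv.Perm.mul_apply, e, e']; simp
      have := orb_tr hs hq hq47 hc hia _ (Q.mul_mem hk hk) (px i) px_ne_ia px_ne_ib (l - i) hkk
      rw [e', sub_eq_zero.mp this]
    · have hl := hy _ _ e'
      rw [hl] at e'
      exact absurd (k.injective (e.trans e'.symm)) px_ne_py

lemma orb_py {Q : Subgroup (Equiv.Perm XX)} (hs : ∀ k ∈ Q, tr 1 * k * (tr 1)⁻¹ ∈ Q)
    {q n : ℕ} (hq : q.Prime) (hq47 : q ≠ 47) (hc : Nat.card Q = q ^ n) (hia : ∀ k ∈ Q, k ia = ia)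
    (k : Equiv.Perm XX) (hk : k ∈ Q) (i : ZZ) :
    k (py i) = py i ∨ ∃ j, k (py i) = px j ∧ k (px j) = py i := by
  have hib := orb_ib hs hq hc hia k hk
  rcases pt_cases (k (py i)) with e | e | ⟨j, e⟩ | ⟨j, e⟩
  · exact absurd (k.injective (e.trans (hia k hk).symm)) py_ne_ia
  · exact absurd (k.injective (e.trans hib.symm)) py_ne_ib
  · right
    refine ⟨j, e, ?_⟩
    rcases orb_px hs hq hq47 hc hia k hk j with h | ⟨l, h1, h2⟩
    · exact absurd (k.injective (e.trans h.symm)) py_ne_px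
    · have := k.injective (e.trans h2.symm)
      rw [h1, ← this]
  · left
    have := orb_tr hs hq hq47 hc hia k hk (py i) py_ne_ia py_ne_ib (j - i) (by rw [e]; simp)
    rw [e, sub_eq_zero.mp this]

lemma orb_sq {Q : Subgroup (Equiv.Perm XX)} (hs : ∀ k ∈ Q, tr 1 * k * (tr 1)⁻¹ ∈ Q)
    {q n : ℕ} (hq : q.Prime) (hq47 : q ≠ 47) (hc : Nat.card Q = q ^ n) (hia : ∀ k ∈ Q, k ia = ia)
    (k : Equiv.Perm XX) (hk : k ∈ Q) : k ^ 2 = 1 := by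
  rw [sq]
  apply perm_ext
  · simp [Equiv.Perm.mul_apply, hia k hk]
  · simp [Equiv.Perm.mul_apply, orb_ib hs hq hc hia k hk]
  · intro i
    rcases orb_px hs hq hq47 hc hia k hk i with h | ⟨l, h1, h2⟩
    · simp [Equiv.Perm.mul_apply, h]
    · simp [Equiv.Perm.mul_apply, h1, h2]
  · intro i
    rcases orb_py hs hq hq47 hc hia k hk i with h | ⟨l, h1, h2⟩
    · simp [Equiv.Perm.mul_apply, h]
    · simp [Equiv.Perm.mul_apply, h1, h2]

lemma card_two_pow {K : Subgroup (Equiv.Perm XX)} (hs : ∀ k ∈ K, tr 1 * k * (tr 1)⁻¹ ∈ K)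
    (hd : ¬ 47 ∣ Nat.card K) (hia : ∀ k ∈ K, k ia = ia) : ∃ n, Nat.card K = 2 ^ n := by
  have hpos : Nat.card K ≠ 0 := Nat.card_pos.ne'
  refine ⟨_, Nat.eq_prime_pow_of_unique_prime_dvd hpos ?_⟩
  intro q hq hqd
  by_contra hq2
  have hq47 : q ≠ 47 := by rintro rfl; exact hd hqd
  obtain ⟨Q, hQK, hQs, hQc⟩ := invsyl K (tr 1) hs order_tr hd q hq
  have hQ : Q = ⊥ := by
    rw [Subgroup.eq_bot_iff_forall]
    intro k hk
    have h1 := orb_sq hQs hq hq47 hQc (fun k hk => hia k (hQK hk)) k hk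
    have h2 : k ^ (q ^ (Nat.card K).factorization q) = 1 := by
      rw [← hQc]
      have : (⟨k, hk⟩ : Q) ^ Nat.card Q = 1 := pow_card_eq_one'
      exact congrArg Subtype.val this
    have hco : Nat.Coprime 2 (q ^ (Nat.card K).factorization q) :=
      Nat.Coprime.pow_right _ ((Nat.coprime_primes Nat.prime_two hq).mpr (Ne.symm hq2))
    have h3 := Nat.dvd_gcd (orderOf_dvd_of_pow_eq_one h1) (orderOf_dvd_of_pow_eq_one h2)
    rw [hco] at h3
    exact orderOf_eq_one_iff.mp (Nat.dvd_one.mp h3)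
  rw [hQ, Subgroup.card_bot] at hQc
  have he : (Nat.card K).factorization q ≠ 0 := by
    have := hq.factorization_pos_of_dvd hpos hqd
    omega
  have := Nat.one_lt_pow he hq.one_lt
  omega

end

section
/-- involutions built from a set of pairs -/
def piF (c : ZZ) (T : ZZ → ZMod 2) : XX → XX :=
  Sum.elim (Fin.cons (n := 47) (α := fun _ => XX) ia (fun i : ZZ => if T i = 0 then px i else py (i + c)))
    (Fin.cons (n := 47) (α := fun _ => XX) ib (fun j : ZZ => if T (j - c) = 0 then py j else px (j - c)))
@[simp] lemma piF_ia (c T) : piF c T ia = ia := rfl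
@[simp] lemma piF_ib (c T) : piF c T ib = ib := rfl
@[simp] lemma piF_px (c T i) : piF c T (px i) = if T i = 0 then px i else py (i + c) := rfl
@[simp] lemma piF_py (c T j) : piF c T (py j) = if T (j - c) = 0 then py j else px (j - c) := rfl
lemma piF_inv (c T) : Function.Involutive (piF c T) := by
  intro z
  rcases pt_cases z with rfl | rfl | ⟨i, rfl⟩ | ⟨i, rfl⟩
  · rfl
  · rfl
  · by_cases h : T i = 0 <;> simp [h]
  · by_cases h : T (i - c) = 0 <;> simp [h]
def pi2 (c : ZZ) (T : ZZ → ZMod 2) : Equiv.Perm XX := (piF_inv c T).toPerm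
@[simp] lemma pi2_ia (c T) : pi2 c T ia = ia := rfl
@[simp] lemma pi2_ib (c T) : pi2 c T ib = ib := rfl
@[simp] lemma pi2_px (c T i) : pi2 c T (px i) = if T i = 0 then px i else py (i + c) := rfl
@[simp] lemma pi2_py (c T j) : pi2 c T (py j) = if T (j - c) = 0 then py j else px (j - c) := rfl
lemma pi2_add (c T T') : pi2 c (T + T') = pi2 c T * pi2 c T' := by
  apply perm_ext
  · simp
  · simp
  · intro i
    rcases z2 (T i) with h | h <;> rcases z2 (T' i) with h' | h' <;>
      simp [h, h', CharTwo.add_self_eq_zero]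
  · intro i
    rcases z2 (T (i - c)) with h | h <;> rcases z2 (T' (i - c)) with h' | h' <;>
      simp [h, h', CharTwo.add_self_eq_zero]
lemma pi2_zero (c) : pi2 c 0 = 1 := by
  apply perm_ext <;> simp
lemma pi2_tr (c T d) : tr d * pi2 c T * (tr d)⁻¹ = pi2 c (fun j => T (j - d)) := by
  rw [← tr_neg]
  apply perm_ext
  · simp
  · simp
  · intro i
    have e1 : i + -d = i - d := by ring
    have e2 : i - d + c + d = i + c := by ring
    rcases z2 (T (i - d)) with h | h <;> simp [e1, e2, h]
  · intro i
    have e1 : i + -d = i - d := by ring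
    have e2 : i - d - c + d = i - c := by ring
    have e3 : i - d - c = i - c - d := by ring
    rcases z2 (T (i - c - d)) with h | h
    · simp [e1, e3, h]
    · simp [e1, e3, h]

lemma shift_card (W : AddSubgroup (ZZ → ZMod 2)) (hsh : ∀ T ∈ W, (fun j => T (j - 1)) ∈ W)
    (hJ : (fun _ => (1 : ZMod 2)) ∉ W) : ∃ a, (a = 0 ∨ a = 23 ∨ a = 46) ∧ Nat.card W = 2 ^ a := by
  classical
  have hd := AddSubgroup.card_addSubgroup_dvd_card W
  have hc : Nat.card (ZZ → ZMod 2) = 2 ^ 47 := by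
    rw [Nat.card_eq_fintype_card, Fintype.card_fun, ZMod.card, ZMod.card]
  rw [hc, Nat.dvd_prime_pow Nat.prime_two] at hd
  obtain ⟨a, ha, hWa⟩ := hd
  refine ⟨a, ?_, hWa⟩
  let f : Function.End W := fun T => ⟨_, hsh T.1 T.2⟩
  have hit : ∀ (n : ℕ) (T : W) j, ((f ^ n) T : W).1 j = T.1 (j - n) := by
    intro n
    induction n with
    | zero => intro T j; simp; rfl
    | succ n ih =>
      intro T j
      rw [pow_succ]
      show ((f ^ n) (f T) : W).1 j = _
      rw [ih]
      show T.1 (j - n - 1) = _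
      rw [Nat.cast_succ, sub_sub]
  have hf : f ^ 47 ^ 1 = 1 := by
    funext T
    apply Subtype.ext
    funext j
    rw [hit]
    have : ((47 ^ 1 : ℕ) : ZZ) = 0 := by rfl
    rw [this, sub_zero]
    rfl
  have h1 := Equiv.Perm.card_fixedPoints_modEq (p := 47) hf
  have h2 : Fintype.card (Function.fixedPoints f) = 1 := by
    rw [Fintype.card_eq_one_iff]
    refine ⟨⟨0, by
      show f 0 = 0
      apply Subtype.ext; rfl⟩, ?_⟩
    rintro ⟨T, hT⟩
    apply Subtype.ext
    show T = 0
    have hT' : f T = T := hT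
    have hp : ∀ n : ℕ, (f ^ n) T = T := by
      intro n
      induction n with
      | zero => rfl
      | succ n ih =>
        rw [pow_succ]
        show (f ^ n) (f T) = T
        rw [hT', ih]
    have hco : ∀ j, T.1 j = T.1 0 := by
      intro j
      have := hit j.val T j
      rw [hp, ZMod.natCast_zmod_val, sub_self] at this
      exact this
    rcases z2 (T.1 0) with h | h
    · apply Subtype.ext; funext j; rw [hco, h]; rfl
    · exfalso
      apply hJ
      have : T.1 = fun _ => 1 := by funext j; rw [hco, h]
      rw [← this]; exact T.2
  rw [h2, ← Nat.card_eq_fintype_card, hWa] at h1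
  have hdec : ∀ a : Fin 48, 2 ^ a.val % 47 = 1 % 47 → a.val = 0 ∨ a.val = 23 ∨ a.val = 46 := by
    decide
  exact hdec ⟨a, by omega⟩ h1

end

section
variable {C : Submodule (ZMod 2) (XX → ZMod 2)} {v : ZZ → ZMod 2}

/-- doubled vector -/
def dbl (c : ZZ) (T : ZZ → ZMod 2) : XX → ZMod 2 := vec 0 0 T (fun j => T (j - c))
lemma dbl_add (c T T') : dbl c (T + T') = dbl c T + dbl c T' := by
  apply pt_ext <;> simp [dbl]
lemma dbl_zero (c) : dbl c 0 = 0 := by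
  apply pt_ext <;> simp [dbl]
lemma dbl_inj (c T) (h : dbl c T = 0) : T = 0 := by
  funext i
  exact congrFun h (px i)

def Vg (C : Submodule (ZMod 2) (XX → ZMod 2)) (c : ZZ) : AddSubgroup (ZZ → ZMod 2) where
  carrier := {T | pi2 c T ∈ autG C}
  zero_mem' := by
    show pi2 c 0 ∈ autG C
    rw [pi2_zero]; exact (autG C).one_mem
  add_mem' := by
    intro a b ha hb
    show pi2 c (a + b) ∈ autG C
    rw [pi2_add]; exact (autG C).mul_mem ha hb
  neg_mem' := by
    intro a ha
    have : -a = a := by funext i; exact ZMod.neg_eq_self_mod_two _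
    rw [this]; exact ha

def Eg (C : Submodule (ZMod 2) (XX → ZMod 2)) (c : ZZ) : AddSubgroup (ZZ → ZMod 2) where
  carrier := {T | dbl c T ∈ C}
  zero_mem' := by
    show dbl c 0 ∈ C
    rw [dbl_zero]; exact C.zero_mem
  add_mem' := by
    intro a b ha hb
    show dbl c (a + b) ∈ C
    rw [dbl_add]; exact C.add_mem ha hb
  neg_mem' := by
    intro a ha
    have : -a = a := by funext i; exact ZMod.neg_eq_self_mod_two _
    rw [this]; exact ha

def phi (c : ZZ) (u : XX → ZMod 2) : ZZ → ZMod 2 := fun i => u (px i) + u (py (i + c))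

lemma mul_phi {c : ZZ} {T : ZZ → ZMod 2} (hT : T ∈ Vg C c) {u : XX → ZMod 2} (hu : u ∈ C) :
    T * phi c u ∈ Eg C c := by
  show dbl c (T * phi c u) ∈ C
  have h1 : u ∘ pi2 c T ∈ C := (hT u).mpr hu
  have e : dbl c (T * phi c u) = u + u ∘ pi2 c T := by
    apply pt_ext
    · simp [dbl, CharTwo.add_self_eq_zero]
    · simp [dbl, CharTwo.add_self_eq_zero]
    · intro i
      rcases z2 (T i) with h | h <;> simp [dbl, phi, h, CharTwo.add_self_eq_zero]
    · intro i
      rcases z2 (T (i - c)) with h | h <;> simp [dbl, phi, h, CharTwo.add_self_eq_zero, add_comm]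
  rw [e]
  exact C.add_mem hu h1

lemma Good.tr_aut (g : Good C v) : tr 1 ∈ autG C := mem_autG_of C _ g.trm
lemma Good.tau_aut (g : Good C v) : tau ∈ autG C := mem_autG_of C _ g.taum
lemma Good.trd (g : Good C v) (d : ZZ) : tr d ∈ autG C :=
  (Subgroup.zpowers_le.mpr g.tr_aut) (tr_mem d)

lemma Good.V_shift (g : Good C v) (c : ZZ) (T) (hT : T ∈ Vg C c) : (fun j => T (j - 1)) ∈ Vg C c := by
  show pi2 c _ ∈ autG C
  rw [← pi2_tr]
  exact (autG C).mul_mem ((autG C).mul_mem (g.trd 1) hT) ((autG C).inv_mem (g.trd 1))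

lemma Good.E_shift (g : Good C v) (c : ZZ) (T) (hT : T ∈ Eg C c) : (fun j => T (j - 1)) ∈ Eg C c := by
  show dbl c _ ∈ C
  have e : dbl c (fun j => T (j - 1)) = dbl c T ∘ tr (-1) := by
    apply pt_ext
    · rfl
    · rfl
    · intro i; simp [dbl, sub_eq_add_neg]
    · intro i
      have : i - c - 1 = i + -1 - c := by ring
      simp [dbl, this]
  rw [e]
  exact (g.trd (-1) _).mpr hT

lemma Good.V_J (g : Good C v) (c : ZZ) : (fun _ => (1 : ZMod 2)) ∉ Vg C c := by
  intro h
  have h1 : pi2 c (fun _ => 1) ∈ autG C := h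
  have h2 := g.norm _ h1 rfl (by
    have e := pi2_tr c (fun _ => 1) 1
    simp only at e
    rw [mul_inv_eq_iff_eq_mul] at e
    rw [← e, mul_assoc, mul_inv_cancel, mul_one]
    exact tr_mem 1)
  obtain ⟨d, hd⟩ := mem_P.mp h2
  have := congrArg (fun f => f (px 0)) hd
  simp at this

lemma Good.E_J (g : Good C v) (c : ZZ) : (fun _ => (1 : ZMod 2)) ∉ Eg C c := by
  intro h
  have h1 : dbl c (fun _ => 1) ∈ C := h
  have h2 := g.de _ h1
  rw [hn_eq] at h2
  simp [dbl, wt] at h2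

lemma Good.V_le_E (g : Good C v) (c : ZZ) : Vg C c ≤ Eg C c := by
  intro T hT
  have := mul_phi hT g.r0
  have e : T * phi c (vec 1 0 (fun _ => 0) (fun _ => 1)) = T := by
    funext i; simp [phi]
  rwa [e] at this

lemma Good.E_small (g : Good C v) (c : ZZ) (T) (hT : T ∈ Eg C c) (a b : ZZ)
    (h : ∀ t, t ≠ a → t ≠ b → T t = 0) : T = 0 := by
  apply dbl_inj c
  by_contra hne
  have h16 := g.mw _ hT hne
  have := hn_le_four _ _ _ (rfl : dbl c T = vec 0 0 T (fun j => T (j - c))) (wt_two a b _ h)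
    (wt_two (a + c) (b + c) _ (by
      intro t ha hb
      apply h
      · intro h; exact ha (by rw [← h]; ring)
      · intro h; exact hb (by rw [← h]; ring)))
  omega

lemma Good.E_card (g : Good C v) (c : ZZ) : Nat.card (Eg C c) ≤ 2 ^ 45 := by
  let S := {t : ZZ // t ≠ 0 ∧ t ≠ 1}
  have hS : Fintype.card S = 45 := by decide
  have hc : Nat.card (S → ZMod 2) = 2 ^ 45 := by
    rw [Nat.card_eq_fintype_card, Fintype.card_fun, ZMod.card, hS]
  rw [← hc]
  apply Nat.card_le_card_of_injective (fun (T : Eg C c) (s : S) => T.1 s.1)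
  intro T T' h
  have h0 := g.E_small c _ ((Eg C c).sub_mem T.2 T'.2) 0 1 (by
    intro t h0 h1
    have := congrFun h ⟨t, h0, h1⟩
    exact sub_eq_zero.mpr this)
  exact Subtype.ext (sub_eq_zero.mp h0)

lemma dot_dbl (c : ZZ) (T : ZZ → ZMod 2) (u : XX → ZMod 2) : dot (dbl c T) u = ∑ i, T i * phi c u i := by
  rw [dot_eq]
  simp only [dbl, vec_ia, vec_ib, vec_px, vec_py, zero_mul, zero_add]
  rw [← Equiv.sum_comp (Equiv.addRight c) (fun i => T (i - c) * u (py i)), ← Finset.sum_add_distrib]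
  apply Finset.sum_congr rfl
  intro i _
  simp [phi, mul_add]

lemma Good.sep (g : Good C v) (c : ZZ) (T : ZZ → ZMod 2) (hT : T ∉ Eg C c) :
    ∃ u ∈ C, ∑ i, T i * phi c u i = 1 := by
  by_contra hcon
  push Not at hcon
  apply hT
  show dbl c T ∈ C
  rw [g.sd]
  intro u hu
  rw [dot_dbl]
  exact (z2 _).resolve_right (hcon u hu)

lemma phi_add (c u w) : phi c (u + w) = phi c u + phi c w := by
  funext i; simp [phi]; abel

lemma Good.sep2 (g : Good C v) (c i j : ZZ) (hij : i ≠ j) :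
    ∃ u ∈ C, phi c u i = 1 ∧ phi c u j = 0 := by
  obtain ⟨u, hu, h1⟩ := g.sep c (Pi.single i 1) (by
    intro h
    have := g.E_small c _ h i i (by intro t ht _; simp [ht])
    simpa using congrFun this i)
  obtain ⟨w, hw, h2⟩ := g.sep c (Pi.single i 1 + Pi.single j 1) (by
    intro h
    have := g.E_small c _ h i j (by intro t ht ht'; simp [ht, ht'])
    have := congrFun this i
    simp [hij] at this)
  have h1' : phi c u i = 1 := by simpa [Pi.single_apply] using h1
  have h2' : phi c w i + phi c w j = 1 := by
    simpa [Pi.single_apply, add_mul, Finset.sum_add_distrib] using h2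
  rcases z2 (phi c u j) with h3 | h3
  · exact ⟨u, hu, h1', h3⟩
  · rcases z2 (phi c w i) with h4 | h4
    · refine ⟨u + w, C.add_mem hu hw, ?_, ?_⟩
      · rw [phi_add, Pi.add_apply, h1', h4, add_zero]
      · rw [h4, zero_add] at h2'
        rw [phi_add, Pi.add_apply, h3, h2']; rfl
    · refine ⟨w, hw, h4, ?_⟩
      rw [h4] at h2'
      simpa using h2'

lemma Good.V_bot (g : Good C v) (c : ZZ) (T) (hT : T ∈ Vg C c) : T = 0 := by
  by_contra hT0
  obtain ⟨a, ha, hVa⟩ := shift_card _ (g.V_shift c) (g.V_J c)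
  obtain ⟨b, hb, hEb⟩ := shift_card _ (g.E_shift c) (g.E_J c)
  have hle := g.V_le_E c
  have hcle : Nat.card (Vg C c) ≤ Nat.card (Eg C c) := AddSubgroup.card_le_of_le hle
  have hE := g.E_card c
  have hV1 : Nat.card (Vg C c) ≠ 1 := by
    intro h
    rw [AddSubgroup.card_eq_one] at h
    rw [h] at hT
    exact hT0 hT
  have hab : a = 23 ∧ b = 23 := by
    rcases ha with rfl | rfl | rfl <;> rcases hb with rfl | rfl | rfl <;> simp_all
  have heq : Vg C c = Eg C c := by
    apply AddSubgroup.eq_of_le_of_card_ge hle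
    rw [hVa, hEb, hab.1, hab.2]
  obtain ⟨i, hi⟩ := Function.ne_iff.mp hT0
  have hi1 : T i = 1 := (z2 _).resolve_left hi
  have key : ∀ F : Finset ZZ, i ∉ F → ∃ T' ∈ Eg C c, T' i = 1 ∧ ∀ j ∈ F, T' j = 0 := by
    intro F
    induction F using Finset.induction_on with
    | empty => intro _; exact ⟨T, hle hT, hi1, by simp⟩
    | insert j F hj ih =>
      intro hiF
      obtain ⟨T', hT', h1, h2⟩ := ih (fun h => hiF (Finset.mem_insert_of_mem h))
      obtain ⟨u, hu, h3, h4⟩ := g.sep2 c i j (by rintro rfl; exact hiF (Finset.mem_insert_self _ _))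
      rw [← heq] at hT'
      refine ⟨_, mul_phi hT' hu, by simp [h1, h3], ?_⟩
      intro l hl
      rcases Finset.mem_insert.mp hl with rfl | hl
      · simp [h4]
      · simp [h2 l hl]
  obtain ⟨T', hT', h1, h2⟩ := key (Finset.univ.erase i) (by simp)
  have := g.E_small c _ hT' i i (by intro t ht _; exact h2 t (by simp [ht]))
  rw [this] at h1
  simp at h1

lemma Good.K_bot (g : Good C v) (K : Subgroup (Equiv.Perm XX)) (hKC : K ≤ autG C)
    (hs : ∀ k ∈ K, tr 1 * k * (tr 1)⁻¹ ∈ K) (hd : ¬ 47 ∣ Nat.card K)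
    (hia : ∀ k ∈ K, k ia = ia) : K = ⊥ := by
  obtain ⟨n, hn⟩ := card_two_pow hs hd hia
  have h2 := Nat.prime_two
  have h247 : 2 ≠ 47 := by norm_num
  rw [Subgroup.eq_bot_iff_forall]
  intro k hk
  by_cases hex : ∃ i a, k (px i) = py a
  · obtain ⟨i, a, hia'⟩ := hex
    exfalso
    have hmv : ∀ j b, k (px j) = py b → b = j + (a - i) := by
      intro j b hb
      have hk' := trc_of hs (i - j) k hk
      have hz : (tr (i - j) * k * (tr (i - j))⁻¹ * k⁻¹) (py a) = tr (b + (i - j) - a) (py a) := by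
        have e1 : k⁻¹ (py a) = px i := by rw [Equiv.Perm.inv_eq_iff_eq, hia']
        have e2 : i + -(i - j) = j := by ring
        rw [← tr_neg]
        simp [Equiv.Perm.mul_apply, e1, -neg_sub, e2, hb]
      have := orb_tr hs h2 h247 hn hia _ (K.mul_mem hk' (K.inv_mem hk)) (py a) py_ne_ia py_ne_ib _ hz
      have e3 : b = (b + (i - j) - a) + (j + (a - i)) := by ring
      rw [e3, this, zero_add]
    classical
    let T : ZZ → ZMod 2 := fun j => if k (px j) = px j then 0 else 1
    have hT : k = pi2 (a - i) T := by
      apply perm_ext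
      · exact hia k hk
      · exact orb_ib hs h2 hn hia k hk
      · intro j
        rcases orb_px hs h2 h247 hn hia k hk j with h | ⟨l, h, _⟩
        · simp [T, h]
        · simp [T, h, hmv j l h]
      · intro j
        rcases orb_py hs h2 h247 hn hia k hk j with h | ⟨l, h, h'⟩
        · have hx : k (px (j - (a - i))) = px (j - (a - i)) := by
            rcases orb_px hs h2 h247 hn hia k hk (j - (a - i)) with h3 | ⟨l, h3, h4⟩
            · exact h3
            · have e := hmv _ _ h3
              rw [sub_add_cancel] at e
              rw [e] at h3
              exact absurd (k.injective (h3.trans h.symm)) px_ne_py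
          rw [pi2_py, if_pos (by simp only [T]; rw [if_pos hx]), h]
        · have e := hmv _ _ h'
          have e' : j - (a - i) = l := by rw [e]; ring
          rw [pi2_py, e', if_neg (by simp [T, h']), h]
    have hTV : T ∈ Vg C (a - i) := by
      show pi2 (a - i) T ∈ autG C
      rw [← hT]; exact hKC hk
    have h0 := congrFun (g.V_bot _ T hTV) i
    simp [T, hia'] at h0
  · push Not at hex
    have hx : ∀ i, k (px i) = px i := by
      intro i
      rcases orb_px hs h2 h247 hn hia k hk i with h | ⟨l, h, _⟩
      · exact h
      · exact absurd h (hex i l)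
    apply perm_ext
    · exact hia k hk
    · exact orb_ib hs h2 hn hia k hk
    · exact hx
    · intro i
      rcases orb_py hs h2 h247 hn hia k hk i with h | ⟨l, _, h⟩
      · exact h
      · exact absurd h (hex l i)

end

section
variable {C : Submodule (ZMod 2) (XX → ZMod 2)} {v : ZZ → ZMod 2}

lemma Good.stab (g : Good C v) (h : Equiv.Perm XX) (hC : h ∈ autG C) (hia : h ia = ia) :
    h ∈ Subgroup.zpowers (tr 1) := by
  let H : Subgroup (Equiv.Perm XX) := autG C ⊓ MulAction.stabilizer (Equiv.Perm XX) ia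
  have hmem : ∀ k, k ∈ H ↔ k ∈ autG C ∧ k ia = ia := fun k => Iff.rfl
  have h1 : tr 1 ∈ H := (hmem _).mpr ⟨g.tr_aut, rfl⟩
  obtain ⟨K, hKH, hKs, hKc, hKd⟩ := burn H (tr 1) h1 order_tr (by
    intro k hk hN
    exact g.norm k ((hmem _).mp hk).1 ((hmem _).mp hk).2 hN)
  have hK := g.K_bot K (fun k hk => ((hmem _).mp (hKH hk)).1) hKs hKd
    (fun k hk => ((hmem _).mp (hKH hk)).2)
  rw [hK, Subgroup.card_bot] at hKc
  have hle : Subgroup.zpowers (tr 1) ≤ H := Subgroup.zpowers_le.mpr h1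
  have heq : Subgroup.zpowers (tr 1) = H := by
    apply Subgroup.eq_of_le_of_card_ge hle
    rw [Nat.card_zpowers, order_tr, ← hKc]
  rw [heq]
  exact ⟨hC, hia⟩

lemma Good.card_M (g : Good C v) (M : Subgroup (Equiv.Perm XX)) (hM : M ≤ autG C) (h1 : tr 1 ∈ M) :
    Nat.card M = 47 * (MulAction.orbit M ia).ncard := by
  have h2 : (MulAction.stabilizer M ia).map M.subtype = Subgroup.zpowers (tr 1) := by
    apply le_antisymm
    · rintro _ ⟨k, hk, rfl⟩
      exact g.stab _ (hM k.2) hk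
    · rw [Subgroup.zpowers_le]
      exact ⟨⟨tr 1, h1⟩, rfl, rfl⟩
  have hcard : Nat.card ((MulAction.stabilizer M ia).map M.subtype) = Nat.card (MulAction.stabilizer M ia) :=
    Nat.card_congr ((MulAction.stabilizer M ia).equivMapOfInjective _ M.subtype_injective).symm.toEquiv
  rw [h2, Nat.card_zpowers, order_tr] at hcard
  rw [← MulAction.index_stabilizer M ia, hcard, Subgroup.card_mul_index]

lemma orbit_tr (M : Subgroup (Equiv.Perm XX)) (h1 : ∀ k ∈ M, tr 1 * k * (tr 1)⁻¹ ∈ M) :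
    ∀ z ∈ MulAction.orbit M ia, tr 1 z ∈ MulAction.orbit M ia := by
  rintro _ ⟨⟨k, hk⟩, rfl⟩
  refine ⟨⟨_, h1 k hk⟩, ?_⟩
  show (tr 1 * k * (tr 1)⁻¹) ia = tr 1 (k ia)
  rw [← tr_neg]
  simp [Equiv.Perm.mul_apply]

/-- setwise stabilizer of the two special points -/
def Ng (C : Submodule (ZMod 2) (XX → ZMod 2)) : Subgroup (Equiv.Perm XX) where
  carrier := {n | n ∈ autG C ∧ ((n ia = ia ∧ n ib = ib) ∨ (n ia = ib ∧ n ib = ia))}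
  one_mem' := ⟨(autG C).one_mem, Or.inl ⟨rfl, rfl⟩⟩
  mul_mem' := by
    rintro a b ⟨ha, ha'⟩ ⟨hb, hb'⟩
    refine ⟨(autG C).mul_mem ha hb, ?_⟩
    simp only [Equiv.Perm.mul_apply]
    rcases ha' with ⟨h1, h2⟩ | ⟨h1, h2⟩ <;> rcases hb' with ⟨h3, h4⟩ | ⟨h3, h4⟩ <;>
      simp [h1, h2, h3, h4]
  inv_mem' := by
    rintro a ⟨ha, ha'⟩
    refine ⟨(autG C).inv_mem ha, ?_⟩
    simp only [Equiv.Perm.inv_eq_iff_eq]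
    rcases ha' with ⟨h1, h2⟩ | ⟨h1, h2⟩ <;> simp [h1, h2]

lemma Good.Ng_card (g : Good C v) : Nat.card (Ng C) = 94 := by
  rw [g.card_M (Ng C) (fun k hk => hk.1) ⟨g.tr_aut, Or.inl ⟨rfl, rfl⟩⟩]
  have : MulAction.orbit (Ng C) ia = {ia, ib} := by
    ext z
    constructor
    · rintro ⟨⟨k, hk⟩, rfl⟩
      show k ia = ia ∨ k ia = ib
      rcases hk.2 with h | h
      · exact Or.inl h.1
      · exact Or.inr h.1
    · rintro (rfl | rfl)
      · exact MulAction.mem_orbit_self _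
      · exact ⟨⟨tau, g.tau_aut, Or.inr ⟨rfl, rfl⟩⟩, rfl⟩
  rw [this, Set.ncard_pair ia_ne_ib]

lemma Good.not96 (g : Good C v) (h96 : Nat.card (autG C) = 4512)
    (htrans : ∃ k ∈ autG C, k ia = px 0) : False := by
  let G := autG C
  let N : Subgroup G := (Ng C).subgroupOf G
  have hNle : Ng C ≤ G := fun k hk => hk.1
  have hNc : Nat.card N = 94 := by
    rw [← g.Ng_card]
    exact Nat.card_congr (Subgroup.subgroupOfEquivOfLe hNle).toEquiv
  have hidx : N.index = 48 := by
    have := N.card_mul_index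
    rw [hNc, h96] at this
    omega
  classical
  let Ω := G ⧸ N
  letI : Fintype Ω := Fintype.ofFinite _
  have hΩ : Fintype.card Ω = 48 := by
    rw [← Nat.card_eq_fintype_card]; exact hidx
  let ρ : G →* Equiv.Perm Ω := MulAction.toPermHom G Ω
  let s : G := ⟨tr 1, g.tr_aut⟩
  let t : G := ⟨tau, g.tau_aut⟩
  have hs47 : s ^ 47 = 1 := by
    apply Subtype.ext
    show tr 1 ^ 47 = 1
    have h := pow_orderOf_eq_one (tr 1)
    rwa [order_tr] at h
  have htt : t * t = 1 := Subtype.ext tau_tau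
  have hst : t * s * t⁻¹ = s⁻¹ := Subtype.ext tau_tr
  have hs1 : ρ s ≠ 1 := by
    intro h
    obtain ⟨k, hk, hk0⟩ := htrans
    let k' : G := ⟨k, hk⟩
    have h1 : ρ s (QuotientGroup.mk k' : Ω) = QuotientGroup.mk k' := by rw [h]; rfl
    have h2 : (QuotientGroup.mk (s * k') : Ω) = QuotientGroup.mk k' := h1
    have h3 : k'⁻¹ * (s * k') ∈ N := by
      exact QuotientGroup.eq.mp h2.symm
    have h4 : k⁻¹ * (tr 1 * k) ∈ Ng C := h3
    have h5 : (k⁻¹ * (tr 1 * k) * (k⁻¹ * (tr 1 * k))) ia = ia := by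
      rw [Equiv.Perm.mul_apply]
      rcases h4.2 with ⟨a, b⟩ | ⟨a, b⟩
      · rw [a, a]
      · rw [a, b]
    have h6 : k⁻¹ * (tr 1 * k) * (k⁻¹ * (tr 1 * k)) = k⁻¹ * (tr 2 * k) := by
      have : tr 2 = tr 1 * tr 1 := by rw [← tr_add]; rfl
      rw [this]; group
    rw [h6, Equiv.Perm.mul_apply, Equiv.Perm.inv_eq_iff_eq, Equiv.Perm.mul_apply, hk0, tr_px, px_inj] at h5
    revert h5; decide
  have hsign : Equiv.Perm.sign (ρ t) = -1 := by
    apply sign_lem hΩ (ρ s) (ρ t) _ hs1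
    · rw [← map_mul, htt, map_one]
    · rw [← map_mul, ← map_inv, ← map_mul, hst, map_inv]
    · rw [← map_pow, hs47, map_one]
  let ε : G →* ℤˣ := Equiv.Perm.sign.comp ρ
  have hεt : ε t = -1 := hsign
  have hεs : ε s = 1 := by
    have : ε s ^ 47 = 1 := by rw [← map_pow, hs47, map_one]
    rcases Int.units_eq_one_or (ε s) with h | h
    · exact h
    · rw [h] at this
      exact absurd this (by decide)
  have hrange : ε.range = ⊤ := by
    rw [eq_top_iff]
    intro x _
    rcases Int.units_eq_one_or x with h | h
    · rw [h]; exact Subgroup.one_mem _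
    · rw [h]; exact ⟨t, hεt⟩
  have hkc : Nat.card ε.ker = 2256 := by
    have h1 := ε.ker.card_mul_index
    rw [Subgroup.index_ker, hrange, h96] at h1
    have h2 : Nat.card (⊤ : Subgroup ℤˣ) = 2 := by
      rw [Subgroup.card_top, Nat.card_eq_fintype_card]; rfl
    rw [h2] at h1
    omega
  let M : Subgroup (Equiv.Perm XX) := ε.ker.map G.subtype
  have hMc : Nat.card M = 2256 := by
    rw [← hkc]
    exact Nat.card_congr (ε.ker.equivMapOfInjective _ G.subtype_injective).symm.toEquiv
  have hMG : M ≤ G := Subgroup.map_subtype_le _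
  have hsM : tr 1 ∈ M := ⟨s, hεs, rfl⟩
  have htM : tau ∉ M := by
    rintro ⟨k, hk, hkt⟩
    have : k = t := Subtype.ext hkt
    rw [this] at hk
    have h1 : ε t = 1 := hk
    rw [hεt] at h1
    revert h1; decide
  obtain ⟨K, hKM, hKs, hKc, hKd⟩ := burn M (tr 1) hsM order_tr (by
    intro h hh hN
    obtain ⟨m, hm⟩ := mem_P.mp hN
    have hm0 : m ≠ 0 := by
      rintro rfl
      rw [tr_zero, mul_inv_eq_one] at hm
      have : tr 1 = 1 := by simpa using hm
      have := order_tr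
      simp_all
    have hfix : tr m (h ia) = h ia := by
      have hx : h⁻¹ (h ia) = ia := by rw [Equiv.Perm.inv_eq_iff_eq]
      rw [← hm, Equiv.Perm.mul_apply, Equiv.Perm.mul_apply, hx, tr_ia]
    rcases pt_cases (h ia) with e | e | ⟨i, e⟩ | ⟨i, e⟩
    · exact g.norm h (hMG hh) e hN
    · exfalso
      have h1 := g.norm (tau * h) ((autG C).mul_mem g.tau_aut (hMG hh)) (by simp [e]) (by
        have : tau * h * tr 1 * (tau * h)⁻¹ = tau * (h * tr 1 * h⁻¹) * tau⁻¹ := by group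
        rw [this]
        obtain ⟨z, hz⟩ := Subgroup.mem_zpowers_iff.mp hN
        rw [← hz, ← conj_zpow, tau_tr]
        exact Subgroup.zpow_mem _ (Subgroup.inv_mem _ (Subgroup.mem_zpowers _)) _)
      have h2 : tau * h ∈ M := (Subgroup.zpowers_le.mpr hsM) h1
      exact htM ((Subgroup.mul_mem_cancel_right _ hh).mp h2)
    · rw [e] at hfix; simp [hm0] at hfix
    · rw [e] at hfix; simp [hm0] at hfix)
  rw [hMc] at hKc
  have hK48 : Nat.card K = 48 := by omega
  obtain ⟨Q, hQK, hQs, hQc⟩ := invsyl K (tr 1) hKs order_tr hKd 3 Nat.prime_three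
  have hf : (48 : ℕ).factorization 3 = 1 := by
    rw [Nat.factorization_def _ Nat.prime_three]
    have : (48 : ℕ) = 3 ^ 1 * 16 := by norm_num
    have : Fact (Nat.Prime 3) := ⟨Nat.prime_three⟩
    rw [show (48 : ℕ) = 3 * 16 by norm_num, padicValNat.mul (by norm_num) (by norm_num), padicValNat_self,
      padicValNat.eq_zero_of_not_dvd (by norm_num)]
  rw [hK48, hf, pow_one] at hQc
  have hdvd : (MulAction.orbit Q ia).ncard ∣ 3 := by
    rw [← MulAction.index_stabilizer, ← hQc]
    exact Subgroup.index_dvd_card _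
  have hmem : ia ∈ MulAction.orbit Q ia := MulAction.mem_orbit_self _
  have hinv := inv_card _ (orbit_tr Q hQs)
  rw [if_pos hmem] at hinv
  have hle := Nat.le_of_dvd (by norm_num) hdvd
  have hone : (MulAction.orbit Q ia).ncard = 1 := by
    have hn2 : (MulAction.orbit Q ia).ncard ≠ 2 := by
      intro h; rw [h] at hdvd; revert hdvd; decide
    split_ifs at hinv <;> omega
  obtain ⟨w, hw⟩ := Set.ncard_eq_one.mp hone
  have hQP : Q ≤ Subgroup.zpowers (tr 1) := by
    intro k hk
    apply g.stab k (hMG (hKM (hQK hk)))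
    have hkm : k ia ∈ MulAction.orbit Q ia := ⟨⟨k, hk⟩, rfl⟩
    rw [hw] at hkm hmem
    exact hkm.trans hmem.symm
  have := Subgroup.card_dvd_of_le hQP
  rw [hQc, Nat.card_zpowers, order_tr] at this
  revert this; decide

lemma Good.final (g : Good C v) : Nat.card (autG C) = 94 := by
  classical
  have hc := g.card_M (autG C) le_rfl g.tr_aut
  have hinv := inv_card (MulAction.orbit (autG C) ia) (orbit_tr _ (fun k hk =>
    (autG C).mul_mem ((autG C).mul_mem g.tr_aut hk) ((autG C).inv_mem g.tr_aut)))
  have hia : ia ∈ MulAction.orbit (autG C) ia := MulAction.mem_orbit_self _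
  have htau : ∀ z ∈ MulAction.orbit (autG C) ia, tau z ∈ MulAction.orbit (autG C) ia := by
    rintro _ ⟨⟨k, hk⟩, rfl⟩
    exact ⟨⟨tau * k, (autG C).mul_mem g.tau_aut hk⟩, rfl⟩
  have hib : ib ∈ MulAction.orbit (autG C) ia := htau _ hia
  have hxy : px 0 ∈ MulAction.orbit (autG C) ia ↔ py 0 ∈ MulAction.orbit (autG C) ia := by
    constructor
    · intro h; simpa using htau _ h
    · intro h; simpa using htau _ h
  by_cases hx : px 0 ∈ MulAction.orbit (autG C) ia
  · exfalso
    rw [if_pos hia, if_pos hib, if_pos hx, if_pos (hxy.mp hx)] at hinv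
    obtain ⟨⟨k, hk⟩, hk0⟩ := hx
    exact g.not96 (by omega) ⟨k, hk, hk0⟩
  · rw [if_pos hia, if_pos hib, if_neg hx, if_neg (fun h => hx (hxy.mpr h))] at hinv
    omega

end

end Helpers

theorem aut_group_bordered_dcc_96_doubly_even (B : Matrix (Fin 48) (Fin 48) (ZMod 2))
    (hB : IsBorderMatrix (n := 47) B) (hsd : IsSelfDual (borderedDCC (n := 47) B))
    (hde : ∀ x ∈ borderedDCC (n := 47) B, hammingNorm x % 4 = 0)
    (hmin : MinWeightIs (borderedDCC (n := 47) B) 16) :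
    autGroupOrder (borderedDCC (n := 47) B) = 94 := by
  obtain ⟨v, g⟩ := good_of B hB hsd hde hmin
  rw [autGroupOrder_eq]
  exact g.final
end
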